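/- arXiv:1003.4242 — 10 statements merged into one kernel-verified Lean document; each statement's English description precedes it below -/
import Mathlib

section
/- Let θ : ℝ → ℝ be differentiable and set N(s) = cos θ(s)·b(s) − sin θ(s)·n(s). Then there exists a function λ : ℝ → ℝ with N'(s) = −λ(s)·t(s) for all s (Rodrigues condition, i.e. c is a line of principal curvature) if and only if θ'(s) + τ(s) = 0 for all s; and in that case λ(s) = −k(s) sin θ(s) for all s. -/
/-!
By the Frenet equations, `N' = (k sin θ) t - (θ' + τ) (cos θ n + sin θ b)`. Since
`cos θ n + sin θ b` is a unit vector orthogonal to `t`, the derivative `N'` is tangential exactly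
when `θ' + τ = 0`, and the coefficient of `t` gives `λ = -k sin θ`.
-/

open Real intervalIntegral
open scoped RealInnerProductSpace

theorem statement1
    (L : ℝ) (hL : 0 < L)
    (c t n b : ℝ → EuclideanSpace ℝ (Fin 3)) (k τ : ℝ → ℝ)
    (hct : ContDiff ℝ (⊤ : ℕ∞) c) (htt : ContDiff ℝ (⊤ : ℕ∞) t) (hnt : ContDiff ℝ (⊤ : ℕ∞) n)
    (hbt : ContDiff ℝ (⊤ : ℕ∞) b) (hkt : ContDiff ℝ (⊤ : ℕ∞) k) (hτt : ContDiff ℝ (⊤ : ℕ∞) τ)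
    (hcL : Function.Periodic c L) (htL : Function.Periodic t L)
    (hnL : Function.Periodic n L) (hbL : Function.Periodic b L)
    (hkL : Function.Periodic k L) (hτL : Function.Periodic τ L)
    (hkpos : ∀ s, 0 < k s)
    (htc : ∀ s, t s = deriv c s)
    (hunit : ∀ s, ‖t s‖ = 1 ∧ ‖n s‖ = 1 ∧ ‖b s‖ = 1)
    (horth : ∀ s, ⟪t s, n s⟫ = 0 ∧ ⟪t s, b s⟫ = 0 ∧ ⟪n s, b s⟫ = 0)
    (hcross : ∀ s, b s 0 = t s 1 * n s 2 - t s 2 * n s 1 ∧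
      b s 1 = t s 2 * n s 0 - t s 0 * n s 2 ∧
      b s 2 = t s 0 * n s 1 - t s 1 * n s 0)
    (hfr1 : ∀ s, deriv t s = k s • n s)
    (hfr2 : ∀ s, deriv n s = (-(k s)) • t s + τ s • b s)
    (hfr3 : ∀ s, deriv b s = (-(τ s)) • n s)
    (θ : ℝ → ℝ) (hθ : Differentiable ℝ θ)
    (N : ℝ → EuclideanSpace ℝ (Fin 3))
    (hN : ∀ s, N s = Real.cos (θ s) • b s - Real.sin (θ s) • n s) :
    ((∃ lam : ℝ → ℝ, ∀ s, deriv N s = -(lam s) • t s) ↔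
      (∀ s, deriv θ s + τ s = 0)) ∧
    (∀ lam : ℝ → ℝ, (∀ s, deriv N s = -(lam s) • t s) →
      ∀ s, lam s = -(k s * Real.sin (θ s))) := by
  have hderiv : ∀ s, deriv N s = (k s * Real.sin (θ s)) • t s -
      (deriv θ s + τ s) • (Real.cos (θ s) • n s + Real.sin (θ s) • b s) := by
    intro s
    have hθs := (hθ s).hasDerivAt
    have hn := ((hnt.differentiable (by simp)) s).hasDerivAt
    have hb := ((hbt.differentiable (by simp)) s).hasDerivAt
    have hN' : N = fun s => Real.cos (θ s) • b s - Real.sin (θ s) • n s := funext hN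
    have h := ((hθs.cos.smul hb).sub (hθs.sin.smul hn)).deriv
    rw [hfr2, hfr3] at h
    rw [hN']
    refine Eq.trans h ?_
    module
  have tangential : ∀ (lam : ℝ → ℝ) (s : ℝ), deriv N s = -(lam s) • t s →
      deriv θ s + τ s = 0 ∧ lam s = -(k s * Real.sin (θ s)) := by
    intro lam s h
    rw [hderiv s] at h
    obtain ⟨htn, htb, hnb⟩ := horth s
    obtain ⟨ht1, hn1, hb1⟩ := hunit s
    have hnt0 : ⟪n s, t s⟫ = 0 := by rw [real_inner_comm]; exact htn
    have hbt0 : ⟪b s, t s⟫ = 0 := by rw [real_inner_comm]; exact htb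
    have hbn0 : ⟪b s, n s⟫ = 0 := by rw [real_inner_comm]; exact hnb
    have et := congrArg (fun v => ⟪t s, v⟫) h
    have en := congrArg (fun v => ⟪n s, v⟫) h
    have eb := congrArg (fun v => ⟪b s, v⟫) h
    simp only [inner_sub_right, inner_add_right, real_inner_smul_right,
      real_inner_self_eq_norm_sq, htn, htb, hnb, hnt0, hbt0, hbn0, ht1, hn1, hb1] at et en eb
    refine ⟨?_, by linarith⟩
    -- The `n`- and `b`-components of `N'` are `-(θ' + τ) cos θ` and `-(θ' + τ) sin θ`.
    linear_combination (-Real.cos (θ s)) * en - Real.sin (θ s) * eb -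
      (deriv θ s + τ s) * Real.sin_sq_add_cos_sq (θ s)
  refine ⟨⟨fun ⟨lam, h⟩ s => (tangential lam s (h s)).1, fun h => ?_⟩,
    fun lam h s => (tangential lam s (h s)).2⟩
  refine ⟨fun s => -(k s * Real.sin (θ s)), fun s => ?_⟩
  rw [hderiv s, h s]
  module
end

section
/- Assume θ'(s) = −τ(s) for all s. Let E = ⟨α_s, α_s⟩, F = ⟨α_s, α_v⟩, G = ⟨α_v, α_v⟩ be the coefficients of the first fundamental form of α. Then for every s: E(s,0) = 1, F(s,0) = 0, G(s,0) = 1, ∂E/∂v(s,0) = −2 k(s) cos θ(s), ∂F/∂v(s,0) = 0 and ∂G/∂v(s,0) = 0. -/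
/-!
The hypothesis `θ' = -τ` makes `w` and `N` parallel in the normal bundle of `c`: the normal components
of their derivatives cancel, so `w' = -k cos θ t` and `N' = k sin θ t`. With
`f(s, v) = A v²/2 + B v³/6 + v⁴ C` this gives
`α_s = (1 - v k cos θ + f k sin θ) t + f_s N` and `α_v = w + f_v N`, and since `(t, w, N)` is
orthonormal,
`E = (1 - v k cos θ + f k sin θ)² + f_s²`, `F = f_s f_v`, `G = 1 + f_v²`.
Here `f` and `f_s` are `O(v²)` and `f_v` is `O(v)`, so only `-2 v k cos θ` in `E` contributes to first
order at `v = 0`.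
-/

open Real intervalIntegral
open scoped RealInnerProductSpace

lemma hasDerivAt_partial_fst {C : ℝ → ℝ → ℝ} (hC : ContDiff ℝ (⊤ : ℕ∞) (Function.uncurry C))
    (s v : ℝ) :
    HasDerivAt (fun u => C u v) (fderiv ℝ (Function.uncurry C) (s, v) (1, 0)) s := by
  have h := ((hC.differentiable (by simp)) (s, v)).hasFDerivAt
  exact h.comp_hasDerivAt s ((hasDerivAt_id s).prodMk (hasDerivAt_const s v))

lemma hasDerivAt_partial_snd {C : ℝ → ℝ → ℝ} (hC : ContDiff ℝ (⊤ : ℕ∞) (Function.uncurry C))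
    (s v : ℝ) :
    HasDerivAt (fun u => C s u) (fderiv ℝ (Function.uncurry C) (s, v) (0, 1)) v := by
  have h := ((hC.differentiable (by simp)) (s, v)).hasFDerivAt
  exact h.comp_hasDerivAt v ((hasDerivAt_const v s).prodMk (hasDerivAt_id v))

lemma differentiable_fderiv_apply {C : ℝ → ℝ → ℝ}
    (hC : ContDiff ℝ (⊤ : ℕ∞) (Function.uncurry C)) (s : ℝ) (e : ℝ × ℝ) :
    Differentiable ℝ (fun v => fderiv ℝ (Function.uncurry C) (s, v) e) := by
  have h : ContDiff ℝ 1 (fderiv ℝ (Function.uncurry C)) :=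
    hC.fderiv_right (by norm_cast)
  have h2 := h.differentiable (by simp)
  fun_prop

/-- The derivatives at `0` of the coefficients `E`, `F`, `G`, written in terms of the tangential
coefficient `1 + v p + v² f q` of `α_s` and of the `N`-coefficients `v² h` of `α_s` and `v g` of
`α_v`, all with their zeros at `v = 0` factored out. -/
lemma deriv_forms_zero {f g h : ℝ → ℝ} (p q : ℝ) (hf : Differentiable ℝ f)
    (hg : Differentiable ℝ g) (hh : Differentiable ℝ h) :
    deriv (fun v => (1 + v * p + v ^ 2 * f v * q) ^ 2 + (v ^ 2 * h v) ^ 2) 0 = 2 * p ∧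
    deriv (fun v => (v ^ 2 * h v) * (v * g v)) 0 = 0 ∧
    deriv (fun v => 1 + (v * g v) ^ 2) 0 = 0 := by
  have hf' := (hf 0).hasDerivAt
  have hg' := (hg 0).hasDerivAt
  have hh' := (hh 0).hasDerivAt
  have hi := hasDerivAt_id (0 : ℝ)
  have hi2 := hi.pow 2
  refine ⟨?_, ?_, ?_⟩
  · have := (((hi.mul_const p).const_add 1).add ((hi2.mul hf').mul_const q)).pow 2 |>.add
      ((hi2.mul hh').pow 2)
    refine (this.congr_deriv ?_ |>.congr_of_eventuallyEq ?_).deriv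
    · simp
    · exact .of_forall fun v => by simp
  · have := (hi2.mul hh').mul (hi.mul hg')
    refine (this.congr_deriv ?_ |>.congr_of_eventuallyEq ?_).deriv
    · simp
    · exact .of_forall fun v => by simp
  · have := ((hi.mul hg').pow 2).const_add 1
    refine (this.congr_deriv ?_ |>.congr_of_eventuallyEq ?_).deriv
    · simp
    · exact .of_forall fun v => by simp

theorem statement4
    (L : ℝ) (hL : 0 < L)
    (c t n b : ℝ → EuclideanSpace ℝ (Fin 3)) (k τ : ℝ → ℝ)
    (hct : ContDiff ℝ (⊤ : ℕ∞) c) (htt : ContDiff ℝ (⊤ : ℕ∞) t) (hnt : ContDiff ℝ (⊤ : ℕ∞) n)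
    (hbt : ContDiff ℝ (⊤ : ℕ∞) b) (hkt : ContDiff ℝ (⊤ : ℕ∞) k) (hτt : ContDiff ℝ (⊤ : ℕ∞) τ)
    (hcL : Function.Periodic c L) (htL : Function.Periodic t L)
    (hnL : Function.Periodic n L) (hbL : Function.Periodic b L)
    (hkL : Function.Periodic k L) (hτL : Function.Periodic τ L)
    (hkpos : ∀ s, 0 < k s)
    (htc : ∀ s, t s = deriv c s)
    (hunit : ∀ s, ‖t s‖ = 1 ∧ ‖n s‖ = 1 ∧ ‖b s‖ = 1)
    (horth : ∀ s, ⟪t s, n s⟫ = 0 ∧ ⟪t s, b s⟫ = 0 ∧ ⟪n s, b s⟫ = 0)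
    (hcross : ∀ s, b s 0 = t s 1 * n s 2 - t s 2 * n s 1 ∧
      b s 1 = t s 2 * n s 0 - t s 0 * n s 2 ∧
      b s 2 = t s 0 * n s 1 - t s 1 * n s 0)
    (hfr1 : ∀ s, deriv t s = k s • n s)
    (hfr2 : ∀ s, deriv n s = (-(k s)) • t s + τ s • b s)
    (hfr3 : ∀ s, deriv b s = (-(τ s)) • n s)
    (θ : ℝ → ℝ) (hθt : ContDiff ℝ (⊤ : ℕ∞) θ)
    (w N : ℝ → EuclideanSpace ℝ (Fin 3))
    (hw : ∀ s, w s = Real.cos (θ s) • n s + Real.sin (θ s) • b s)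
    (hN : ∀ s, N s = Real.cos (θ s) • b s - Real.sin (θ s) • n s)
    (A B : ℝ → ℝ) (C : ℝ → ℝ → ℝ)
    (hAt : ContDiff ℝ (⊤ : ℕ∞) A) (hBt : ContDiff ℝ (⊤ : ℕ∞) B)
    (hCt : ContDiff ℝ (⊤ : ℕ∞) (Function.uncurry C))
    (hAL : Function.Periodic A L) (hBL : Function.Periodic B L)
    (hCL : ∀ v, Function.Periodic (fun s => C s v) L)
    (hC0 : ∀ s, C s 0 = 0)
    (α : ℝ → ℝ → EuclideanSpace ℝ (Fin 3))
    (hα : ∀ s v, α s v = c s + v • w s +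
      (A s * v ^ 2 / 2 + B s * v ^ 3 / 6 + v ^ 4 * C s v) • N s)
    (hθ' : ∀ s, deriv θ s = -τ s)
    (αs αv αss αsv αvv : ℝ → ℝ → EuclideanSpace ℝ (Fin 3))
    (hαs : ∀ s v, αs s v = deriv (fun u => α u v) s)
    (hαv : ∀ s v, αv s v = deriv (fun u => α s u) v)
    (hαss : ∀ s v, αss s v = deriv (fun u => αs u v) s)
    (hαsv : ∀ s v, αsv s v = deriv (fun u => αs s u) v)
    (hαvv : ∀ s v, αvv s v = deriv (fun u => αv s u) v)
    (Ef Ff Gf : ℝ → ℝ → ℝ)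
    (hE : ∀ s v, Ef s v = ⟪αs s v, αs s v⟫)
    (hF : ∀ s v, Ff s v = ⟪αs s v, αv s v⟫)
    (hG : ∀ s v, Gf s v = ⟪αv s v, αv s v⟫)
    :
    ∀ s : ℝ,
      Ef s 0 = 1 ∧ Ff s 0 = 0 ∧ Gf s 0 = 1 ∧
      deriv (fun v => Ef s v) 0 = -2 * k s * Real.cos (θ s) ∧
      deriv (fun v => Ff s v) 0 = 0 ∧
      deriv (fun v => Gf s v) 0 = 0 := by
  intro s
  set p : ℝ := -(k s * Real.cos (θ s)) with hp
  set q : ℝ := k s * Real.sin (θ s) with hq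
  have hnd : HasDerivAt n ((-(k s)) • t s + τ s • b s) s :=
    hfr2 s ▸ (hnt.differentiable (by simp) s).hasDerivAt
  have hbd : HasDerivAt b ((-(τ s)) • n s) s :=
    hfr3 s ▸ (hbt.differentiable (by simp) s).hasDerivAt
  have hcd : HasDerivAt c (t s) s := htc s ▸ (hct.differentiable (by simp) s).hasDerivAt
  have hθd : HasDerivAt θ (-τ s) s := hθ' s ▸ (hθt.differentiable (by simp) s).hasDerivAt
  have hAd := (hAt.differentiable (by simp) s).hasDerivAt
  have hBd := (hBt.differentiable (by simp) s).hasDerivAt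
  have hwd : HasDerivAt w (p • t s) s := by
    rw [funext hw]
    refine ((hθd.cos.smul hnd).add (hθd.sin.smul hbd)).congr_deriv ?_
    rw [hp]
    module
  have hNd : HasDerivAt N (q • t s) s := by
    rw [funext hN]
    refine ((hθd.cos.smul hbd).sub (hθd.sin.smul hnd)).congr_deriv ?_
    rw [hq]
    module
  -- The `N`-coefficient `f` of `α` and its partials are `f = v² φ`, `f_s = v² h`, `f_v = v g`.
  set φ : ℝ → ℝ := fun v => A s / 2 + B s * v / 6 + v ^ 2 * C s v with hφ
  set h : ℝ → ℝ := fun v => deriv A s / 2 + deriv B s * v / 6 +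
    v ^ 2 * fderiv ℝ (Function.uncurry C) (s, v) (1, 0) with hh
  set g : ℝ → ℝ := fun v => A s + B s * v / 2 + 4 * v ^ 2 * C s v +
    v ^ 3 * fderiv ℝ (Function.uncurry C) (s, v) (0, 1) with hg
  have hCs : Differentiable ℝ (fun v => C s v) := fun v =>
    (hasDerivAt_partial_snd hCt s v).differentiableAt
  have hC1 := differentiable_fderiv_apply hCt s (1, 0)
  have hC2 := differentiable_fderiv_apply hCt s (0, 1)
  have hφd : Differentiable ℝ φ := by fun_prop
  have hhd : Differentiable ℝ h := by fun_prop
  have hgd : Differentiable ℝ g := by fun_prop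
  have has : ∀ v, αs s v = (1 + v * p + v ^ 2 * φ v * q) • t s + (v ^ 2 * h v) • N s := by
    intro v
    rw [hαs, funext fun u => hα u v]
    have hfd := (((hAd.mul_const (v ^ 2)).div_const 2).add
      ((hBd.mul_const (v ^ 3)).div_const 6)).add
      ((hasDerivAt_partial_fst hCt s v).const_mul (v ^ 4))
    refine (((hcd.add (hwd.const_smul v)).add (hfd.smul hNd)).congr_deriv ?_).deriv
    simp only [hφ, hh, Pi.add_apply]
    module
  have hav : ∀ v, αv s v = w s + (v * g v) • N s := by
    intro v
    rw [hαv, funext fun u => hα s u]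
    have hi := hasDerivAt_id v
    have hfd := ((((hi.pow 2).const_mul (A s)).div_const 2).add
      (((hi.pow 3).const_mul (B s)).div_const 6)).add
      ((hi.pow 4).mul (hasDerivAt_partial_snd hCt s v))
    refine ((((hi.smul_const (w s)).const_add (c s)).add
      (hfd.smul_const (N s))).congr_deriv ?_).deriv
    simp only [hg, id, Pi.pow_apply]
    module
  obtain ⟨h1, h2, h3⟩ := hunit s
  obtain ⟨o1, o2, o3⟩ := horth s
  have htt1 : ⟪t s, t s⟫ = 1 := by rw [real_inner_self_eq_norm_sq, h1]; norm_num
  have hnn1 : ⟪n s, n s⟫ = 1 := by rw [real_inner_self_eq_norm_sq, h2]; norm_num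
  have hbb1 : ⟪b s, b s⟫ = 1 := by rw [real_inner_self_eq_norm_sq, h3]; norm_num
  have o3' : ⟪b s, n s⟫ = 0 := by rw [real_inner_comm, o3]
  have hcs := Real.sin_sq_add_cos_sq (θ s)
  have htw : ⟪t s, w s⟫ = 0 := by simp [hw, inner_add_right, inner_smul_right, o1, o2]
  have htN : ⟪t s, N s⟫ = 0 := by simp [hN, inner_sub_right, inner_smul_right, o1, o2]
  have hNw : ⟪N s, w s⟫ = 0 := by
    simp only [hN, hw, inner_add_right, inner_sub_left, inner_smul_right, real_inner_smul_left,
      o3, o3', hnn1, hbb1]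
    ring
  have hww : ⟪w s, w s⟫ = 1 := by
    simp only [hw, inner_add_right, inner_add_left, inner_smul_right, real_inner_smul_left,
      o3, o3', hnn1, hbb1]
    linarith
  have hNN : ⟪N s, N s⟫ = 1 := by
    simp only [hN, inner_sub_right, inner_sub_left, inner_smul_right, real_inner_smul_left,
      o3, o3', hnn1, hbb1]
    linarith
  have hNt : ⟪N s, t s⟫ = 0 := by rw [real_inner_comm, htN]
  have hwN : ⟪w s, N s⟫ = 0 := by rw [real_inner_comm, hNw]
  have hEf : ∀ v, Ef s v = (1 + v * p + v ^ 2 * φ v * q) ^ 2 + (v ^ 2 * h v) ^ 2 := by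
    intro v
    simp only [hE, has, inner_add_right, inner_add_left, inner_smul_right, real_inner_smul_left,
      htt1, htN, hNt, hNN]
    ring
  have hFf : ∀ v, Ff s v = (v ^ 2 * h v) * (v * g v) := by
    intro v
    simp only [hF, has, hav, inner_add_right, inner_add_left, inner_smul_right,
      real_inner_smul_left, htw, htN, hNw, hNN]
    ring
  have hGf : ∀ v, Gf s v = 1 + (v * g v) ^ 2 := by
    intro v
    simp only [hG, hav, inner_add_right, inner_add_left, inner_smul_right,
      real_inner_smul_left, hww, hwN, hNw, hNN]
    ring
  obtain ⟨d1, d2, d3⟩ := deriv_forms_zero p q hφd hgd hhd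
  refine ⟨by simp [hEf], by simp [hFf], by simp [hGf], ?_, ?_, ?_⟩
  · rw [funext hEf, d1, hp]
    ring
  · rw [funext hFf, d2]
  · rw [funext hGf, d3]
end

section
/- Assume θ'(s) = −τ(s) for all s. Let e = det[α_s, α_v, α_ss]/√(EG−F²), f = det[α_s, α_v, α_sv]/√(EG−F²), g = det[α_s, α_v, α_vv]/√(EG−F²) be the coefficients of the second fundamental form of α. Then for every s: e(s,0) = −k(s) sin θ(s), f(s,0) = 0 and g(s,0) = A(s). -/
/-!
Along `v = 0` everything is computed in the Frenet frame. The condition `θ' = -τ` makes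
`w' = -k cos θ · t` and `N' = k sin θ · t`. Since the coefficient of `N` in `α` is `O(v²)`, one gets
`α_s = t`, `α_v = w`, `α_ss = k n`, `α_sv = w'` and `α_vv = A N` at `v = 0`. Hence `EG - F² = 1`
there, and the three determinants follow from `det[t, n, b] = 1`: `det[t, w, k n] = -k sin θ`,
`det[t, w, w'] = 0` because `w'` is parallel to `t`, and `det[t, w, A N] = A`.
-/

open Real intervalIntegral
open scoped RealInnerProductSpace

noncomputable def det3 (u v w : EuclideanSpace ℝ (Fin 3)) : ℝ :=
  Matrix.det (Matrix.of fun i j => ![u, v, w] j i)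

/-- The partial derivative `D = ∂C/∂s` of a smooth `C` exists everywhere and is itself
differentiable in the second variable, as needed for the mixed derivative `α_sv`. -/
lemma partial_left {C : ℝ → ℝ → ℝ} (hC : ContDiff ℝ (⊤ : ℕ∞) (Function.uncurry C)) :
    ∃ D : ℝ → ℝ → ℝ, (∀ s v, HasDerivAt (fun u => C u v) (D s v) s) ∧
      ∀ s, Differentiable ℝ (D s) := by
  refine ⟨fun s v => fderiv ℝ (Function.uncurry C) (s, v) (1, 0), fun s v => ?_, fun s => ?_⟩
  · have h1 : HasFDerivAt (Function.uncurry C) (fderiv ℝ (Function.uncurry C) (s, v)) (s, v) :=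
      (hC.differentiable (by simp) (s, v)).hasFDerivAt
    have h2 : HasDerivAt (fun u : ℝ => (u, v)) ((1 : ℝ), (0 : ℝ)) s :=
      (hasDerivAt_id s).prodMk (hasDerivAt_const s v)
    exact h1.comp_hasDerivAt s h2
  · have h : ContDiff ℝ 1 (fderiv ℝ (Function.uncurry C)) := hC.fderiv_right (by norm_cast)
    have h' : Differentiable ℝ (fderiv ℝ (Function.uncurry C)) := h.differentiable (by simp)
    fun_prop

lemma det3_eq (u v w : EuclideanSpace ℝ (Fin 3)) :
    det3 u v w = u 0 * (v 1 * w 2 - v 2 * w 1) - u 1 * (v 0 * w 2 - v 2 * w 0)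
      + u 2 * (v 0 * w 1 - v 1 * w 0) := by
  simp [det3, Matrix.det_fin_three]
  ring

theorem statement5
    (L : ℝ) (hL : 0 < L)
    (c t n b : ℝ → EuclideanSpace ℝ (Fin 3)) (k τ : ℝ → ℝ)
    (hct : ContDiff ℝ (⊤ : ℕ∞) c) (htt : ContDiff ℝ (⊤ : ℕ∞) t) (hnt : ContDiff ℝ (⊤ : ℕ∞) n)
    (hbt : ContDiff ℝ (⊤ : ℕ∞) b) (hkt : ContDiff ℝ (⊤ : ℕ∞) k) (hτt : ContDiff ℝ (⊤ : ℕ∞) τ)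
    (hcL : Function.Periodic c L) (htL : Function.Periodic t L)
    (hnL : Function.Periodic n L) (hbL : Function.Periodic b L)
    (hkL : Function.Periodic k L) (hτL : Function.Periodic τ L)
    (hkpos : ∀ s, 0 < k s)
    (htc : ∀ s, t s = deriv c s)
    (hunit : ∀ s, ‖t s‖ = 1 ∧ ‖n s‖ = 1 ∧ ‖b s‖ = 1)
    (horth : ∀ s, ⟪t s, n s⟫ = 0 ∧ ⟪t s, b s⟫ = 0 ∧ ⟪n s, b s⟫ = 0)
    (hcross : ∀ s, b s 0 = t s 1 * n s 2 - t s 2 * n s 1 ∧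
      b s 1 = t s 2 * n s 0 - t s 0 * n s 2 ∧
      b s 2 = t s 0 * n s 1 - t s 1 * n s 0)
    (hfr1 : ∀ s, deriv t s = k s • n s)
    (hfr2 : ∀ s, deriv n s = (-(k s)) • t s + τ s • b s)
    (hfr3 : ∀ s, deriv b s = (-(τ s)) • n s)
    (θ : ℝ → ℝ) (hθt : ContDiff ℝ (⊤ : ℕ∞) θ)
    (w N : ℝ → EuclideanSpace ℝ (Fin 3))
    (hw : ∀ s, w s = Real.cos (θ s) • n s + Real.sin (θ s) • b s)
    (hN : ∀ s, N s = Real.cos (θ s) • b s - Real.sin (θ s) • n s)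
    (A B : ℝ → ℝ) (C : ℝ → ℝ → ℝ)
    (hAt : ContDiff ℝ (⊤ : ℕ∞) A) (hBt : ContDiff ℝ (⊤ : ℕ∞) B)
    (hCt : ContDiff ℝ (⊤ : ℕ∞) (Function.uncurry C))
    (hAL : Function.Periodic A L) (hBL : Function.Periodic B L)
    (hCL : ∀ v, Function.Periodic (fun s => C s v) L)
    (hC0 : ∀ s, C s 0 = 0)
    (α : ℝ → ℝ → EuclideanSpace ℝ (Fin 3))
    (hα : ∀ s v, α s v = c s + v • w s +
      (A s * v ^ 2 / 2 + B s * v ^ 3 / 6 + v ^ 4 * C s v) • N s)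
    (hθ' : ∀ s, deriv θ s = -τ s)
    (αs αv αss αsv αvv : ℝ → ℝ → EuclideanSpace ℝ (Fin 3))
    (hαs : ∀ s v, αs s v = deriv (fun u => α u v) s)
    (hαv : ∀ s v, αv s v = deriv (fun u => α s u) v)
    (hαss : ∀ s v, αss s v = deriv (fun u => αs u v) s)
    (hαsv : ∀ s v, αsv s v = deriv (fun u => αs s u) v)
    (hαvv : ∀ s v, αvv s v = deriv (fun u => αv s u) v)
    (Ef Ff Gf : ℝ → ℝ → ℝ)
    (hE : ∀ s v, Ef s v = ⟪αs s v, αs s v⟫)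
    (hF : ∀ s v, Ff s v = ⟪αs s v, αv s v⟫)
    (hG : ∀ s v, Gf s v = ⟪αv s v, αv s v⟫)
    (ef ff gf : ℝ → ℝ → ℝ)
    (he : ∀ s v, ef s v =
      det3 (αs s v) (αv s v) (αss s v) / Real.sqrt (Ef s v * Gf s v - Ff s v ^ 2))
    (hf : ∀ s v, ff s v =
      det3 (αs s v) (αv s v) (αsv s v) / Real.sqrt (Ef s v * Gf s v - Ff s v ^ 2))
    (hg : ∀ s v, gf s v =
      det3 (αs s v) (αv s v) (αvv s v) / Real.sqrt (Ef s v * Gf s v - Ff s v ^ 2))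
    :
    ∀ s : ℝ,
      ef s 0 = -(k s * Real.sin (θ s)) ∧ ff s 0 = 0 ∧ gf s 0 = A s := by
  obtain ⟨D, hD, hDd⟩ := partial_left hCt
  have dc : ∀ s, HasDerivAt c (t s) s := fun s => by
    rw [htc]; exact (hct.differentiable (by simp) s).hasDerivAt
  have dn : ∀ s, HasDerivAt n ((-(k s)) • t s + τ s • b s) s := fun s => by
    rw [← hfr2]; exact (hnt.differentiable (by simp) s).hasDerivAt
  have db : ∀ s, HasDerivAt b ((-(τ s)) • n s) s := fun s => by
    rw [← hfr3]; exact (hbt.differentiable (by simp) s).hasDerivAt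
  have dθ : ∀ s, HasDerivAt θ (-τ s) s := fun s => by
    rw [← hθ']; exact (hθt.differentiable (by simp) s).hasDerivAt
  have dw : ∀ s, HasDerivAt w (-(k s * Real.cos (θ s)) • t s) s := fun s => by
    rw [funext hw]
    refine (((dθ s).cos.smul (dn s)).add ((dθ s).sin.smul (db s))).congr_deriv ?_
    module
  have dN : ∀ s, HasDerivAt N ((k s * Real.sin (θ s)) • t s) s := fun s => by
    rw [funext hN]
    refine (((dθ s).cos.smul (db s)).sub ((dθ s).sin.smul (dn s))).congr_deriv ?_
    module
  have dA : ∀ s, HasDerivAt A (deriv A s) s := fun s =>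
    (hAt.differentiable (by simp) s).hasDerivAt
  have dB : ∀ s, HasDerivAt B (deriv B s) s := fun s =>
    (hBt.differentiable (by simp) s).hasDerivAt
  have hαs' : ∀ s v, αs s v = t s + v • (-(k s * Real.cos (θ s)) • t s) +
      ((A s * v ^ 2 / 2 + B s * v ^ 3 / 6 + v ^ 4 * C s v) • ((k s * Real.sin (θ s)) • t s) +
       (deriv A s * v ^ 2 / 2 + deriv B s * v ^ 3 / 6 + v ^ 4 * D s v) • N s) := fun s v => by
    rw [hαs, funext fun u => hα u v]
    exact (((dc s).add ((dw s).const_smul v)).add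
      ((((((dA s).mul_const (v ^ 2)).div_const 2).add (((dB s).mul_const (v ^ 3)).div_const 6)).add
        ((hD s v).const_mul (v ^ 4))).smul (dN s))).deriv
  have hCs : ∀ s, ContDiff ℝ (⊤ : ℕ∞) (C s) := fun s =>
    hCt.comp (contDiff_const.prodMk contDiff_id)
  have dC : ∀ s v, HasDerivAt (C s) (deriv (C s) v) v := fun s v =>
    ((hCs s).differentiable (by simp) v).hasDerivAt
  have dC2 : ∀ s v, HasDerivAt (deriv (C s)) (deriv (deriv (C s)) v) v := fun s v => by
    have h : ContDiff ℝ 1 (deriv (C s)) :=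
      ((contDiff_succ_iff_deriv (n := 1)).1 ((hCs s).of_le (by norm_cast))).2.2
    exact (h.differentiable (by simp) v).hasDerivAt
  have hαv' : ∀ s v, αv s v = w s + (A s * v + B s * v ^ 2 / 2 + (4 * v ^ 3 * C s v +
      v ^ 4 * deriv (C s) v)) • N s := fun s v => by
    rw [hαv, funext fun u => hα s u]
    have p := fun m : ℕ => hasDerivAt_pow m v
    refine ((((hasDerivAt_id v).smul_const (w s)).const_add (c s)).add
      ((((((p 2).const_mul (A s)).div_const 2).add (((p 3).const_mul (B s)).div_const 6)).add
        ((p 4).mul (dC s v))).smul_const (N s))).deriv.trans ?_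
    rw [one_smul]
    congr 2
    push_cast
    ring
  intro s
  have e1 : αs s 0 = t s := by simp [hαs']
  have e2 : αv s 0 = w s := by simp [hαv']
  have e3 : αss s 0 = k s • n s := by
    rw [hαss, show (fun u => αs u 0) = t from funext fun u => by simp [hαs'], hfr1]
  have e4 : αsv s 0 = -(k s * Real.cos (θ s)) • t s := by
    rw [hαsv, funext fun u => hαs' s u]
    have p := fun m : ℕ => hasDerivAt_pow m (0 : ℝ)
    have q := fun a b : ℝ => fun (f : ℝ → ℝ) (f' : ℝ) (hf : HasDerivAt f f' 0) =>
      ((((p 2).const_mul a).div_const 2).add (((p 3).const_mul b).div_const 6)).add ((p 4).mul hf)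
    refine ((((hasDerivAt_id (0 : ℝ)).smul_const (-(k s * Real.cos (θ s)) • t s)).const_add
      (t s)).add (((q (A s) (B s) _ _ (dC s 0)).smul_const
        ((k s * Real.sin (θ s)) • t s)).add ((q (deriv A s) (deriv B s) _ _
          (hDd s 0).hasDerivAt).smul_const (N s)))).deriv.trans ?_
    simp
  have e5 : αvv s 0 = A s • N s := by
    rw [hαvv, funext fun u => hαv' s u]
    have p := fun m : ℕ => hasDerivAt_pow m (0 : ℝ)
    refine (((((((hasDerivAt_id (0 : ℝ)).const_mul (A s)).add
      (((p 2).const_mul (B s)).div_const 2)).add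
        ((((p 3).const_mul 4).mul (dC s 0)).add ((p 4).mul (dC2 s 0)))).smul_const
          (N s)).const_add (w s))).deriv.trans ?_
    simp
  obtain ⟨ut, un, ub⟩ := hunit s
  obtain ⟨otn, otb, onb⟩ := horth s
  have itt : ⟪t s, t s⟫ = 1 := by rw [real_inner_self_eq_norm_sq, ut]; norm_num
  have inn : ⟪n s, n s⟫ = 1 := by rw [real_inner_self_eq_norm_sq, un]; norm_num
  have ibb : ⟪b s, b s⟫ = 1 := by rw [real_inner_self_eq_norm_sq, ub]; norm_num
  have ibn : ⟪b s, n s⟫ = 0 := by rw [real_inner_comm]; exact onb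
  have hsc := Real.sin_sq_add_cos_sq (θ s)
  have hsq : Real.sqrt (Ef s 0 * Gf s 0 - Ff s 0 ^ 2) = 1 := by
    have hFz : Ff s 0 = 0 := by
      rw [hF, e1, e2, hw]; simp [inner_add_right, inner_smul_right, otn, otb]
    have hGo : Gf s 0 = 1 := by
      rw [hG, e2, hw]
      simp only [inner_add_right, inner_add_left, inner_smul_right, real_inner_smul_left,
        inn, ibb, ibn, onb]
      linear_combination hsc
    rw [hE, e1, itt, hFz, hGo]; simp
  -- The frame is positively oriented: `b = t × n`, so `det[t, n, b] = ⟨b, b⟩ = 1`.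
  have hdet : det3 (t s) (n s) (b s) = 1 := by
    obtain ⟨h0, h1, h2⟩ := hcross s
    rw [← ibb, det3_eq]
    simp only [PiLp.inner_apply, Fin.sum_univ_three, RCLike.inner_apply, conj_trivial]
    rw [h0, h1, h2]
    ring
  rw [det3_eq] at hdet
  rw [he, hf, hg, hsq, e1, e2, e3, e4, e5, hw, hN]
  simp only [det3_eq, div_one, PiLp.add_apply, PiLp.sub_apply, PiLp.smul_apply, smul_eq_mul]
  refine ⟨?_, ?_, ?_⟩
  · linear_combination (-(k s * Real.sin (θ s))) * hdet
  · ring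
  · linear_combination A s * (Real.sin (θ s) ^ 2 + Real.cos (θ s) ^ 2) * hdet + A s * hsc
end

section
/- Assume θ'(s) = −τ(s) for all s. With e, f, g the coefficients of the second fundamental form of α, for every s the partial derivatives in v at (s,0) satisfy: ∂e/∂v(s,0) = k(s) cos θ(s)·(k(s) sin θ(s) − A(s)), ∂f/∂v(s,0) = A'(s) and ∂g/∂v(s,0) = B(s). -/
/-!
When `θ' = -τ`, the frame `(t, w, N)` is rotation minimizing: `w' = -k cos θ t` and
`N' = k sin θ t`. Writing `h = A v²/2 + B v³/6 + v⁴ C` for the height function and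
`p = 1 - v k cos θ + h k sin θ`, this gives `α_s = p t + h_s N` and `α_v = w + h_v N`, and
every second partial derivative of `α` has the form `X t + Y w + Z N`. Its coefficient in the
second fundamental form is thus `(p (Z - h_v Y) - h_s X) / √(p² + p² h_v² + h_s²)`.

At `v = 0` one has `p = 1`, `h_s = h_v = h_sv = 0` and `h_vv = A`; the derivative of the
denominator cancels the contribution of the factor `p`, and the derivative of the quotient is
`Z_v - A Y` (`hasDerivAt_coeff`). What remains is to read off `Y` and `Z_v` in the three cases.
The 3-jets in `v` of `h`, `h_s`, `h_ss` come from `exists_jet`, since these functions all have the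
shape `a v²/2 + b v³/6 + v⁴ D(v)`.
-/

open Real intervalIntegral
open scoped RealInnerProductSpace

/-- The `s`-partial derivative of a smooth function of two variables exists and is again smooth
in both variables. -/
lemma exists_partial (C : ℝ → ℝ → ℝ) (hC : ContDiff ℝ (⊤ : ℕ∞) (Function.uncurry C)) :
    ∃ C₁ : ℝ → ℝ → ℝ, ContDiff ℝ (⊤ : ℕ∞) (Function.uncurry C₁) ∧
      ∀ s v, HasDerivAt (fun u => C u v) (C₁ s v) s := by
  refine ⟨fun s v => fderiv ℝ (Function.uncurry C) (s, v) (1, 0), ?_, ?_⟩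
  · have h1 : ContDiff ℝ (⊤ : ℕ∞) (fderiv ℝ (Function.uncurry C)) :=
      hC.fderiv_right (by simp)
    exact h1.clm_apply contDiff_const
  · intro s v
    have h1 : HasFDerivAt (Function.uncurry C) (fderiv ℝ (Function.uncurry C) (s, v)) (s, v) :=
      (hC.differentiable (by simp) (s, v)).hasFDerivAt
    exact h1.comp_hasDerivAt (f := fun u : ℝ => (u, v)) s
      ((hasDerivAt_id s).prodMk (hasDerivAt_const s v))

/-- The derivatives up to order three at `0` of `q = a v²/2 + b v³/6 + v⁴ D(v)`; here `q₁`, `q₂`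
are the first and second derivatives of `q`. -/
lemma exists_jet (a b : ℝ) (D : ℝ → ℝ) (hD : ContDiff ℝ (⊤ : ℕ∞) D) :
    ∃ q₁ q₂ : ℝ → ℝ,
      (∀ v, HasDerivAt (fun v => a * v ^ 2 / 2 + b * v ^ 3 / 6 + v ^ 4 * D v) (q₁ v) v) ∧
      (∀ v, HasDerivAt q₁ (q₂ v) v) ∧
      q₁ 0 = 0 ∧ q₂ 0 = a ∧ HasDerivAt q₂ b 0 := by
  have hD0 : ∀ v, HasDerivAt D (deriv D v) v := fun v =>
    (hD.differentiable (by simp) v).hasDerivAt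
  have hD1 : ContDiff ℝ (⊤ : ℕ∞) (deriv D) := (contDiff_infty_iff_deriv.1 hD).2
  have hD1' : ∀ v, HasDerivAt (deriv D) (deriv (deriv D) v) v := fun v =>
    (hD1.differentiable (by simp) v).hasDerivAt
  have hD2 : ContDiff ℝ (⊤ : ℕ∞) (deriv (deriv D)) := (contDiff_infty_iff_deriv.1 hD1).2
  have hD2' : ∀ v, HasDerivAt (deriv (deriv D)) (deriv (deriv (deriv D)) v) v := fun v =>
    (hD2.differentiable (by simp) v).hasDerivAt
  have hp : ∀ (m : ℕ) (v : ℝ), HasDerivAt (fun v : ℝ => v ^ m) (m * v ^ (m - 1)) v :=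
    fun m v => hasDerivAt_pow m v
  refine ⟨fun v => a * v + b * v ^ 2 / 2 + (4 * v ^ 3 * D v + v ^ 4 * deriv D v),
    fun v => a + b * v + (12 * v ^ 2 * D v + 8 * v ^ 3 * deriv D v +
      v ^ 4 * deriv (deriv D) v), ?_, ?_, by simp, by simp, ?_⟩
  · intro v
    refine HasDerivAt.congr_deriv (((((hp 2 v).const_mul a).div_const 2).add
      (((hp 3 v).const_mul b).div_const 6)).add ((hp 4 v).mul (hD0 v))) ?_
    push_cast; ring
  · intro v
    refine HasDerivAt.congr_deriv ((((hasDerivAt_id v).const_mul a).add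
      (((hp 2 v).const_mul b).div_const 2)).add
      ((((hp 3 v).const_mul 4).mul (hD0 v)).add ((hp 4 v).mul (hD1' v)))) ?_
    push_cast; ring
  · refine HasDerivAt.congr_deriv ((((hasDerivAt_id (0 : ℝ)).const_mul b).const_add a).add
      (((((hp 2 0).const_mul 12).mul (hD0 0)).add
        (((hp 3 0).const_mul 8).mul (hD1' 0))).add ((hp 4 0).mul (hD2' 0)))) ?_
    simp

lemma det3_frame (T W M : EuclideanSpace ℝ (Fin 3)) (p x y X Y Z : ℝ) :
    det3 (p • T + x • M) (W + y • M) (X • T + Y • W + Z • M) =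
      (p * (Z - y * Y) - x * X) * det3 T W M := by
  simp [det3, Matrix.det_fin_three]
  ring

/-- Derivative at `v = 0` of a coefficient of the second fundamental form, for first partial
derivatives `p T + x M`, `W + y M` and second partial derivative `X T + Y W + Z M` in a positively
oriented orthonormal frame `(T, W, M)`. The denominator is the square root of
`p² + p² y² + x²`, whose derivative at `0` equals `p'(0)`. -/
lemma hasDerivAt_coeff (T W M : EuclideanSpace ℝ (Fin 3))
    (hTT : ⟪T, T⟫ = 1) (hWW : ⟪W, W⟫ = 1) (hMM : ⟪M, M⟫ = 1)
    (hTW : ⟪T, W⟫ = 0) (hTM : ⟪T, M⟫ = 0) (hWM : ⟪W, M⟫ = 0) (hdet : det3 T W M = 1)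
    (p x y X Y Z : ℝ → ℝ) (P a X' Y' Z' : ℝ)
    (hp0 : p 0 = 1) (hp : HasDerivAt p P 0) (hx0 : x 0 = 0) (hx : HasDerivAt x 0 0)
    (hy0 : y 0 = 0) (hy : HasDerivAt y a 0)
    (hX : HasDerivAt X X' 0) (hY : HasDerivAt Y Y' 0) (hZ : HasDerivAt Z Z' 0)
    (U V S : ℝ → EuclideanSpace ℝ (Fin 3))
    (hU : ∀ v, U v = p v • T + x v • M) (hV : ∀ v, V v = W + y v • M)
    (hS : ∀ v, S v = X v • T + Y v • W + Z v • M) :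
    HasDerivAt (fun v => det3 (U v) (V v) (S v) /
      Real.sqrt (⟪U v, U v⟫ * ⟪V v, V v⟫ - ⟪U v, V v⟫ ^ 2)) (Z' - a * Y 0) 0 := by
  have hMT : ⟪M, T⟫ = 0 := by rw [real_inner_comm]; exact hTM
  have hMW : ⟪M, W⟫ = 0 := by rw [real_inner_comm]; exact hWM
  have hfun : (fun v => det3 (U v) (V v) (S v) /
      Real.sqrt (⟪U v, U v⟫ * ⟪V v, V v⟫ - ⟪U v, V v⟫ ^ 2)) =
      fun v => (p v * (Z v - y v * Y v) - x v * X v) /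
        Real.sqrt (p v * p v + (p v * y v) * (p v * y v) + x v * x v) := by
    funext v
    rw [hU, hV, hS, det3_frame, hdet, mul_one]
    congr 2
    simp only [inner_add_left, inner_add_right, real_inner_smul_left, real_inner_smul_right,
      hTT, hWW, hMM, hTW, hTM, hWM, hMT, hMW]
    ring
  rw [hfun]
  have hnum := (hp.mul (hZ.sub (hy.mul hY))).sub (hx.mul hX)
  have hrad := ((hp.mul hp).add ((hp.mul hy).mul (hp.mul hy))).add (hx.mul hx)
  have hden := hrad.sqrt (by simp [hp0, hx0, hy0])
  refine (hnum.div hden (by simp [hp0, hx0, hy0])).congr_deriv ?_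
  simp [hp0, hx0, hy0]
  ring

theorem statement6
    (L : ℝ) (hL : 0 < L)
    (c t n b : ℝ → EuclideanSpace ℝ (Fin 3)) (k τ : ℝ → ℝ)
    (hct : ContDiff ℝ (⊤ : ℕ∞) c) (htt : ContDiff ℝ (⊤ : ℕ∞) t) (hnt : ContDiff ℝ (⊤ : ℕ∞) n)
    (hbt : ContDiff ℝ (⊤ : ℕ∞) b) (hkt : ContDiff ℝ (⊤ : ℕ∞) k) (hτt : ContDiff ℝ (⊤ : ℕ∞) τ)
    (hcL : Function.Periodic c L) (htL : Function.Periodic t L)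
    (hnL : Function.Periodic n L) (hbL : Function.Periodic b L)
    (hkL : Function.Periodic k L) (hτL : Function.Periodic τ L)
    (hkpos : ∀ s, 0 < k s)
    (htc : ∀ s, t s = deriv c s)
    (hunit : ∀ s, ‖t s‖ = 1 ∧ ‖n s‖ = 1 ∧ ‖b s‖ = 1)
    (horth : ∀ s, ⟪t s, n s⟫ = 0 ∧ ⟪t s, b s⟫ = 0 ∧ ⟪n s, b s⟫ = 0)
    (hcross : ∀ s, b s 0 = t s 1 * n s 2 - t s 2 * n s 1 ∧
      b s 1 = t s 2 * n s 0 - t s 0 * n s 2 ∧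
      b s 2 = t s 0 * n s 1 - t s 1 * n s 0)
    (hfr1 : ∀ s, deriv t s = k s • n s)
    (hfr2 : ∀ s, deriv n s = (-(k s)) • t s + τ s • b s)
    (hfr3 : ∀ s, deriv b s = (-(τ s)) • n s)
    (θ : ℝ → ℝ) (hθt : ContDiff ℝ (⊤ : ℕ∞) θ)
    (w N : ℝ → EuclideanSpace ℝ (Fin 3))
    (hw : ∀ s, w s = Real.cos (θ s) • n s + Real.sin (θ s) • b s)
    (hN : ∀ s, N s = Real.cos (θ s) • b s - Real.sin (θ s) • n s)
    (A B : ℝ → ℝ) (C : ℝ → ℝ → ℝ)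
    (hAt : ContDiff ℝ (⊤ : ℕ∞) A) (hBt : ContDiff ℝ (⊤ : ℕ∞) B)
    (hCt : ContDiff ℝ (⊤ : ℕ∞) (Function.uncurry C))
    (hAL : Function.Periodic A L) (hBL : Function.Periodic B L)
    (hCL : ∀ v, Function.Periodic (fun s => C s v) L)
    (hC0 : ∀ s, C s 0 = 0)
    (α : ℝ → ℝ → EuclideanSpace ℝ (Fin 3))
    (hα : ∀ s v, α s v = c s + v • w s +
      (A s * v ^ 2 / 2 + B s * v ^ 3 / 6 + v ^ 4 * C s v) • N s)
    (hθ' : ∀ s, deriv θ s = -τ s)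
    (αs αv αss αsv αvv : ℝ → ℝ → EuclideanSpace ℝ (Fin 3))
    (hαs : ∀ s v, αs s v = deriv (fun u => α u v) s)
    (hαv : ∀ s v, αv s v = deriv (fun u => α s u) v)
    (hαss : ∀ s v, αss s v = deriv (fun u => αs u v) s)
    (hαsv : ∀ s v, αsv s v = deriv (fun u => αs s u) v)
    (hαvv : ∀ s v, αvv s v = deriv (fun u => αv s u) v)
    (Ef Ff Gf : ℝ → ℝ → ℝ)
    (hE : ∀ s v, Ef s v = ⟪αs s v, αs s v⟫)
    (hF : ∀ s v, Ff s v = ⟪αs s v, αv s v⟫)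
    (hG : ∀ s v, Gf s v = ⟪αv s v, αv s v⟫)
    (ef ff gf : ℝ → ℝ → ℝ)
    (he : ∀ s v, ef s v =
      det3 (αs s v) (αv s v) (αss s v) / Real.sqrt (Ef s v * Gf s v - Ff s v ^ 2))
    (hf : ∀ s v, ff s v =
      det3 (αs s v) (αv s v) (αsv s v) / Real.sqrt (Ef s v * Gf s v - Ff s v ^ 2))
    (hg : ∀ s v, gf s v =
      det3 (αs s v) (αv s v) (αvv s v) / Real.sqrt (Ef s v * Gf s v - Ff s v ^ 2))
    :
    ∀ s : ℝ,
      deriv (fun v => ef s v) 0 =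
        k s * Real.cos (θ s) * (k s * Real.sin (θ s) - A s) ∧
      deriv (fun v => ff s v) 0 = deriv A s ∧
      deriv (fun v => gf s v) 0 = B s := by
  intro s
  have hder : ∀ {F : Type} [NormedAddCommGroup F] [NormedSpace ℝ F] {φ : ℝ → F},
      ContDiff ℝ (⊤ : ℕ∞) φ → ∀ u, HasDerivAt φ (deriv φ u) u := fun h u =>
    (h.differentiable (by simp) u).hasDerivAt
  have hder2 : ∀ {φ : ℝ → ℝ},
      ContDiff ℝ (⊤ : ℕ∞) φ → ∀ u, HasDerivAt (deriv φ) (deriv (deriv φ) u) u := fun h u =>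
    hder (contDiff_infty_iff_deriv.1 h).2 u
  have dc : ∀ u, HasDerivAt c (t u) u := fun u => by rw [htc]; exact hder hct u
  have dt : ∀ u, HasDerivAt t (k u • n u) u := fun u => by rw [← hfr1]; exact hder htt u
  have dn : ∀ u, HasDerivAt n ((-(k u)) • t u + τ u • b u) u := fun u => by
    rw [← hfr2]; exact hder hnt u
  have db : ∀ u, HasDerivAt b ((-(τ u)) • n u) u := fun u => by rw [← hfr3]; exact hder hbt u
  have dθ : ∀ u, HasDerivAt θ (-τ u) u := fun u => by rw [← hθ']; exact hder hθt u
  have hwf : w = fun s => Real.cos (θ s) • n s + Real.sin (θ s) • b s := funext hw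
  have hNf : N = fun s => Real.cos (θ s) • b s - Real.sin (θ s) • n s := funext hN
  -- the frame `(t, w, N)` is rotation minimizing
  have dw : ∀ u, HasDerivAt w (-(k u * Real.cos (θ u)) • t u) u := fun u => by
    rw [hwf]
    refine HasDerivAt.congr_deriv (((dθ u).cos.smul (dn u)).add ((dθ u).sin.smul (db u))) ?_
    module
  have dN : ∀ u, HasDerivAt N ((k u * Real.sin (θ u)) • t u) u := fun u => by
    rw [hNf]
    refine HasDerivAt.congr_deriv (((dθ u).cos.smul (db u)).sub ((dθ u).sin.smul (dn u))) ?_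
    module
  have dt' : ∀ u, HasDerivAt t
      ((k u * Real.cos (θ u)) • w u - (k u * Real.sin (θ u)) • N u) u := fun u => by
    convert dt u using 1
    rw [hw, hN]
    have h1 := Real.sin_sq_add_cos_sq (θ u)
    have h2 : k u • n u = (k u * (Real.sin (θ u) ^ 2 + Real.cos (θ u) ^ 2)) • n u := by
      rw [h1, mul_one]
    rw [h2]
    module
  -- `κ₁`, `κ₂` are the coefficients `k cos θ`, `k sin θ`
  obtain ⟨κ₁, hκ₁⟩ : ∃ f : ℝ → ℝ, f = fun u => k u * Real.cos (θ u) := ⟨_, rfl⟩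
  obtain ⟨κ₂, hκ₂⟩ : ∃ f : ℝ → ℝ, f = fun u => k u * Real.sin (θ u) := ⟨_, rfl⟩
  have κ₁s : ContDiff ℝ (⊤ : ℕ∞) κ₁ := by rw [hκ₁]; exact hkt.mul hθt.cos
  have κ₂s : ContDiff ℝ (⊤ : ℕ∞) κ₂ := by rw [hκ₂]; exact hkt.mul hθt.sin
  have κ₁e : ∀ u, k u * Real.cos (θ u) = κ₁ u := fun u => by rw [hκ₁]
  have κ₂e : ∀ u, k u * Real.sin (θ u) = κ₂ u := fun u => by rw [hκ₂]
  simp only [κ₁e, κ₂e] at dw dN dt'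
  obtain ⟨C₁, hC₁s, hC₁⟩ := exists_partial C hCt
  obtain ⟨C₂, hC₂s, hC₂⟩ := exists_partial C₁ hC₁s
  -- the height function and its first two `s`-derivatives
  obtain ⟨h, hh⟩ : ∃ f : ℝ → ℝ → ℝ,
    f = fun s v => A s * v ^ 2 / 2 + B s * v ^ 3 / 6 + v ^ 4 * C s v := ⟨_, rfl⟩
  obtain ⟨h₁, hh₁⟩ : ∃ f : ℝ → ℝ → ℝ,
    f = fun s v => deriv A s * v ^ 2 / 2 + deriv B s * v ^ 3 / 6 + v ^ 4 * C₁ s v := ⟨_, rfl⟩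
  obtain ⟨h₂, hh₂⟩ : ∃ f : ℝ → ℝ → ℝ,
    f = fun s v => deriv (deriv A) s * v ^ 2 / 2 + deriv (deriv B) s * v ^ 3 / 6 +
      v ^ 4 * C₂ s v := ⟨_, rfl⟩
  have dh : ∀ u v, HasDerivAt (fun u => h u v) (h₁ u v) u := fun u v => by
    rw [hh, hh₁]
    exact ((((hder hAt u).mul_const _).div_const 2).add
      (((hder hBt u).mul_const _).div_const 6)).add ((hC₁ u v).const_mul _)
  have dh₁ : ∀ u v, HasDerivAt (fun u => h₁ u v) (h₂ u v) u := fun u v => by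
    rw [hh₁, hh₂]
    exact ((((hder2 hAt u).mul_const _).div_const 2).add
      (((hder2 hBt u).mul_const _).div_const 6)).add ((hC₂ u v).const_mul _)
  have hslice : ∀ D : ℝ → ℝ → ℝ, ContDiff ℝ (⊤ : ℕ∞) (Function.uncurry D) → ∀ u,
      ContDiff ℝ (⊤ : ℕ∞) (D u) := fun D hD u =>
    hD.comp (contDiff_const.prodMk contDiff_id)
  have jh := fun u => exists_jet (A u) (B u) (C u) (hslice C hCt u)
  choose q q' jq jq' jq0 jq2_zero jq3 using jh
  obtain ⟨r, r', jr, jr', jr0, jr2_zero, -⟩ :=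
    exists_jet (deriv A s) (deriv B s) (C₁ s) (hslice C₁ hC₁s s)
  obtain ⟨z, z', jz, -, jz0, -, -⟩ :=
    exists_jet (deriv (deriv A) s) (deriv (deriv B) s) (C₂ s) (hslice C₂ hC₂s s)
  have jq : ∀ u v, HasDerivAt (h u) (q u v) v := by rw [hh]; exact jq
  have jr : ∀ v, HasDerivAt (h₁ s) (r v) v := by rw [hh₁]; exact jr
  have jz : ∀ v, HasDerivAt (h₂ s) (z v) v := by rw [hh₂]; exact jz
  have h00 : h s 0 = 0 := by simp [hh]
  have h₁0 : h₁ s 0 = 0 := by simp [hh₁]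
  have hα' : ∀ s v, α s v = c s + v • w s + h s v • N s := fun s v => by rw [hα, hh]
  -- the coefficient of `t` in `α_s`
  obtain ⟨p, hp⟩ : ∃ f : ℝ → ℝ → ℝ, f = fun s v => 1 - v * κ₁ s + h s v * κ₂ s := ⟨_, rfl⟩
  have eαs : ∀ u v, αs u v = p u v • t u + h₁ u v • N u := fun u v => by
    rw [hαs]
    simp only [hα']
    have := ((dc u).add ((dw u).const_smul v)).add ((dh u v).smul (dN u))
    refine HasDerivAt.deriv (this.congr_deriv ?_)
    rw [hp]; module
  have eαv : ∀ u v, αv u v = w u + q u v • N u := fun u v => by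
    rw [hαv]
    simp only [hα']
    refine HasDerivAt.deriv ?_
    refine HasDerivAt.congr_deriv ((((hasDerivAt_id v).smul_const (w u)).const_add (c u)).add
      ((jq u v).smul_const (N u))) ?_
    simp
  have eαss : ∀ v, αss s v =
      ((-(v * deriv κ₁ s) + (h₁ s v * κ₂ s + h s v * deriv κ₂ s)) + h₁ s v * κ₂ s) • t s +
        (p s v * κ₁ s) • w s + (h₂ s v - p s v * κ₂ s) • N s := fun v => by
    rw [hαss]
    simp only [eαs]
    have dp : HasDerivAt (fun u => p u v)
        (-(v * deriv κ₁ s) + (h₁ s v * κ₂ s + h s v * deriv κ₂ s)) s := by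
      rw [hp]
      exact (((hder κ₁s s).const_mul v).const_sub 1).add ((dh s v).mul (hder κ₂s s))
    refine HasDerivAt.deriv ?_
    refine HasDerivAt.congr_deriv ((dp.smul (dt' s)).add ((dh₁ s v).smul (dN s))) ?_
    module
  have dpv : ∀ v, HasDerivAt (p s) (-κ₁ s + q s v * κ₂ s) v := fun v => by
    rw [hp]
    refine HasDerivAt.congr_deriv ((((hasDerivAt_id v).mul_const (κ₁ s)).const_sub 1).add
      ((jq s v).mul_const (κ₂ s))) ?_
    simp
  have eαsv : ∀ v, αsv s v =
      (-κ₁ s + q s v * κ₂ s) • t s + (0 : ℝ) • w s + r v • N s := fun v => by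
    rw [hαsv]
    simp only [eαs]
    refine HasDerivAt.deriv ?_
    refine HasDerivAt.congr_deriv (((dpv v).smul_const (t s)).add ((jr v).smul_const (N s))) ?_
    module
  have eαvv : ∀ v, αvv s v = (0 : ℝ) • t s + (0 : ℝ) • w s + q' s v • N s := fun v => by
    rw [hαvv]
    simp only [eαv]
    refine HasDerivAt.deriv ?_
    refine HasDerivAt.congr_deriv (((jq' s v).smul_const (N s)).const_add (w s)) ?_
    module
  -- `(t, w, N)` is orthonormal and positively oriented
  obtain ⟨ut, un, ub⟩ := hunit s
  obtain ⟨otn, otb, onb⟩ := horth s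
  have ott : ⟪t s, t s⟫ = 1 := by rw [real_inner_self_eq_norm_sq, ut]; norm_num
  have onn : ⟪n s, n s⟫ = 1 := by rw [real_inner_self_eq_norm_sq, un]; norm_num
  have obb : ⟪b s, b s⟫ = 1 := by rw [real_inner_self_eq_norm_sq, ub]; norm_num
  have obn : ⟪b s, n s⟫ = 0 := by rw [real_inner_comm]; exact onb
  have cs := Real.sin_sq_add_cos_sq (θ s)
  have hWW : ⟪w s, w s⟫ = 1 := by
    simp only [hw, inner_add_left, inner_add_right, real_inner_smul_left, real_inner_smul_right,
      onn, obb, onb, obn]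
    linarith
  have hNN : ⟪N s, N s⟫ = 1 := by
    simp only [hN, inner_sub_left, inner_sub_right, real_inner_smul_left, real_inner_smul_right,
      onn, obb, onb, obn]
    linarith
  have htw : ⟪t s, w s⟫ = 0 := by
    simp [hw, inner_add_right, real_inner_smul_right, otn, otb]
  have htN : ⟪t s, N s⟫ = 0 := by
    simp [hN, inner_sub_right, real_inner_smul_right, otn, otb]
  have hwN : ⟪w s, N s⟫ = 0 := by
    simp only [hw, hN, inner_add_left, inner_sub_right, real_inner_smul_left,
      real_inner_smul_right, onn, obb, onb, obn]
    ring
  have hdet : det3 (t s) (w s) (N s) = 1 := by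
    obtain ⟨e0, e1, e2⟩ := hcross s
    have hb : b s 0 * b s 0 + b s 1 * b s 1 + b s 2 * b s 2 = 1 := by
      have := obb
      simp only [PiLp.inner_apply, Fin.sum_univ_three] at this
      simpa [← sq] using this
    have h1 : det3 (t s) (w s) (N s) = (Real.sin (θ s) ^ 2 + Real.cos (θ s) ^ 2) *
        (b s 0 * (t s 1 * n s 2 - t s 2 * n s 1) + b s 1 * (t s 2 * n s 0 - t s 0 * n s 2) +
          b s 2 * (t s 0 * n s 1 - t s 1 * n s 0)) := by
      rw [hw, hN]
      simp [det3, Matrix.det_fin_three, -Real.sin_sq_add_cos_sq]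
      ring
    rw [h1, ← e0, ← e1, ← e2, cs, hb, one_mul]
  have hp0 : p s 0 = 1 := by simp [hp, h00]
  have hP : HasDerivAt (p s) (-κ₁ s) 0 := by simpa [jq0] using dpv 0
  have hx : HasDerivAt (h₁ s) 0 0 := by simpa [jr0] using jr 0
  have hy : HasDerivAt (q s) (A s) 0 := by simpa [jq2_zero] using jq' s 0
  have hcoeff := fun (X Y Z : ℝ → ℝ) (X' Y' Z' : ℝ) (hX : HasDerivAt X X' 0)
      (hY : HasDerivAt Y Y' 0) (hZ : HasDerivAt Z Z' 0) (S) =>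
    hasDerivAt_coeff (t s) (w s) (N s) ott hWW hNN htw htN hwN hdet (p s) (h₁ s) (q s) X Y Z
      _ _ X' Y' Z' hp0 hP h₁0 hx (jq0 s) hy hX hY hZ (αs s) (αv s) S (eαs s) (eαv s)
  refine ⟨?_, ?_, ?_⟩
  · simp only [he, hE, hF, hG]
    have hX := (((((hasDerivAt_id (0 : ℝ)).mul_const (deriv κ₁ s)).neg).add
      (((jr 0).mul_const (κ₂ s)).add ((jq s 0).mul_const (deriv κ₂ s)))).add
      ((jr 0).mul_const (κ₂ s)))
    have hZ := (jz 0).sub (hP.mul_const (κ₂ s))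
    rw [(hcoeff _ _ _ _ _ _ hX (hP.mul_const (κ₁ s)) hZ (αss s) eαss).deriv,
      κ₁e, κ₂e, jz0, hp0]
    ring
  · simp only [hf, hE, hF, hG]
    rw [(hcoeff _ _ _ _ _ _ ((hy.mul_const (κ₂ s)).const_add (-κ₁ s)) (hasDerivAt_const 0 0)
      (jr' 0) (αsv s) eαsv).deriv, jr2_zero]
    ring
  · simp only [hg, hE, hF, hG]
    rw [(hcoeff _ _ _ _ _ _ (hasDerivAt_const 0 0) (hasDerivAt_const 0 0)
      (jq3 s) (αvv s) eαvv).deriv]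
    ring
end

section
/- Assume θ'(s) = −τ(s) for all s. Define the coefficients of the differential equation of principal curvature lines: L̄ = Fg − Gf, M̄ = Eg − Ge, N̄ = Ef − Fe. Then for every s: L̄(s,0) = 0, N̄(s,0) = 0, M̄(s,0) = A(s) + k(s) sin θ(s), ∂L̄/∂v(s,0) = −A'(s), ∂N̄/∂v(s,0) = A'(s), and ∂M̄/∂v(s,0) = B(s) − k(s)A(s)cos θ(s) − k(s)² sin θ(s) cos θ(s). -/
/-!
With `θ' = -τ` the frame `(t, w, N)` along the curve is parallel in the normal directions: writing
`p = k cos θ` and `q = k sin θ`, the Frenet equations become `t' = p w - q N`, `w' = -p t`,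
`N' = q t` (`frame_w`, `frame_N`). If `h` denotes the coefficient of `N` in `α` and
`P = 1 - v p + h q`, then

* `α_s = P t + h_s N` and `α_v = w + h_v N`,
* `α_ss = (P_s + h_s q) t + P p w + (h_ss - P q) N`, `α_sv = P_v t + h_sv N`, `α_vv = h_vv N`.

Since `(t, w, N)` is orthonormal with determinant `1`, all six fundamental coefficients become
explicit scalar expressions in `P`, `h` and their partial derivatives (`det3_frame` gives the
determinants). The claim is then a first order expansion at `v = 0` of scalar functions of `v`,
carried out in `expansion_at_zero`.
-/

open Real intervalIntegral
open scoped RealInnerProductSpace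

/-- The partial derivatives of a smooth function of two real variables, as smooth functions. -/
lemma exists_partials (F : ℝ → ℝ → ℝ) (hF : ContDiff ℝ (⊤ : ℕ∞) (Function.uncurry F)) :
    ∃ Fs Fv : ℝ → ℝ → ℝ, ContDiff ℝ (⊤ : ℕ∞) (Function.uncurry Fs) ∧
      ContDiff ℝ (⊤ : ℕ∞) (Function.uncurry Fv) ∧
      (∀ s v, HasDerivAt (fun u => F u v) (Fs s v) s) ∧
      (∀ s v, HasDerivAt (fun u => F s u) (Fv s v) v) := by
  have hd : ContDiff ℝ (⊤ : ℕ∞) (fderiv ℝ (Function.uncurry F)) :=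
    hF.fderiv_right (m := ((⊤ : ℕ∞) : WithTop ℕ∞)) (by norm_cast)
  have hdiff : Differentiable ℝ (Function.uncurry F) := hF.differentiable (by simp)
  refine ⟨fun s v => fderiv ℝ (Function.uncurry F) (s, v) (1, 0),
    fun s v => fderiv ℝ (Function.uncurry F) (s, v) (0, 1),
    hd.clm_apply contDiff_const, hd.clm_apply contDiff_const, fun s v => ?_, fun s v => ?_⟩
  · exact (hdiff (s, v)).hasFDerivAt.comp_hasDerivAt (f := fun u : ℝ => (u, v)) s
      ((hasDerivAt_id s).prodMk (hasDerivAt_const s v))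
  · exact (hdiff (s, v)).hasFDerivAt.comp_hasDerivAt (f := fun u : ℝ => (s, u)) v
      ((hasDerivAt_const v s).prodMk (hasDerivAt_id v))

lemma det3_frame_s7 (t w N : EuclideanSpace ℝ (Fin 3)) (P z y x₁ x₂ x₃ : ℝ) :
    det3 (P • t + z • N) (w + y • N) (x₁ • t + x₂ • w + x₃ • N) =
      (P * (x₃ - y * x₂) - z * x₁) * det3 t w N := by
  simp [det3, Matrix.det_fin_three]
  ring

/-- The rotated frame `(t, w, N)` is orthonormal and has determinant `1`. -/
lemma frame_orthonormal (t n b : EuclideanSpace ℝ (Fin 3)) (θ : ℝ)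
    (hunit : ‖t‖ = 1 ∧ ‖n‖ = 1 ∧ ‖b‖ = 1)
    (horth : ⟪t, n⟫ = 0 ∧ ⟪t, b⟫ = 0 ∧ ⟪n, b⟫ = 0)
    (hcross : b 0 = t 1 * n 2 - t 2 * n 1 ∧ b 1 = t 2 * n 0 - t 0 * n 2 ∧
      b 2 = t 0 * n 1 - t 1 * n 0)
    (w N : EuclideanSpace ℝ (Fin 3))
    (hw : w = Real.cos θ • n + Real.sin θ • b) (hN : N = Real.cos θ • b - Real.sin θ • n) :
    ⟪t, t⟫ = 1 ∧ ⟪w, w⟫ = 1 ∧ ⟪N, N⟫ = 1 ∧ ⟪t, w⟫ = 0 ∧ ⟪t, N⟫ = 0 ∧ ⟪w, N⟫ = 0 ∧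
      det3 t w N = 1 := by
  obtain ⟨ht, hn, hb⟩ := hunit
  obtain ⟨htn, htb, hnb⟩ := horth
  have htt : ⟪t, t⟫ = 1 := by rw [real_inner_self_eq_norm_sq, ht]; norm_num
  have hnn : ⟪n, n⟫ = 1 := by rw [real_inner_self_eq_norm_sq, hn]; norm_num
  have hbb : ⟪b, b⟫ = 1 := by rw [real_inner_self_eq_norm_sq, hb]; norm_num
  have hbn : ⟪b, n⟫ = 0 := by rw [real_inner_comm]; exact hnb
  have hcs := Real.cos_sq_add_sin_sq θ
  subst hw hN
  refine ⟨htt, ?_, ?_, ?_, ?_, ?_, ?_⟩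
  · simp only [inner_add_left, inner_add_right, real_inner_smul_left, real_inner_smul_right,
      hnn, hbb, hnb, hbn]
    linear_combination hcs
  · simp only [inner_sub_left, inner_sub_right, real_inner_smul_left, real_inner_smul_right,
      hnn, hbb, hnb, hbn]
    linear_combination hcs
  · simp [inner_add_right, real_inner_smul_right, htn, htb]
  · simp [inner_sub_right, real_inner_smul_right, htn, htb]
  · simp only [inner_add_left, inner_sub_right, real_inner_smul_left, real_inner_smul_right,
      hnn, hbb, hnb, hbn]
    ring
  · obtain ⟨h0, h1, h2⟩ := hcross
    have hbb' : b 0 * b 0 + b 1 * b 1 + b 2 * b 2 = 1 := by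
      rw [PiLp.inner_apply, Fin.sum_univ_three] at hbb
      simpa [← pow_two] using hbb
    -- `det3 t w N = (cos² θ + sin² θ) ⟪t × n, b⟫`, and `t × n = b`.
    have hdet : det3 t (Real.cos θ • n + Real.sin θ • b) (Real.cos θ • b - Real.sin θ • n) =
        (Real.cos θ ^ 2 + Real.sin θ ^ 2) * ((t 1 * n 2 - t 2 * n 1) * b 0 +
          (t 2 * n 0 - t 0 * n 2) * b 1 + (t 0 * n 1 - t 1 * n 0) * b 2) := by
      simp [det3, Matrix.det_fin_three, -Real.cos_sq_add_sin_sq]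
      ring
    rw [hdet, hcs, ← h0, ← h1, ← h2, one_mul, hbb']

lemma frame_w (t n b : ℝ → EuclideanSpace ℝ (Fin 3)) (θ : ℝ → ℝ) (k τ s : ℝ)
    (hn : HasDerivAt n ((-k) • t s + τ • b s) s) (hb : HasDerivAt b ((-τ) • n s) s)
    (hθ : HasDerivAt θ (-τ) s) :
    HasDerivAt (fun s => Real.cos (θ s) • n s + Real.sin (θ s) • b s)
      ((-(k * Real.cos (θ s))) • t s) s := by
  refine HasDerivAt.congr_deriv ((hθ.cos.smul hn).add (hθ.sin.smul hb)) ?_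
  module

lemma frame_N (t n b : ℝ → EuclideanSpace ℝ (Fin 3)) (θ : ℝ → ℝ) (k τ s : ℝ)
    (hn : HasDerivAt n ((-k) • t s + τ • b s) s) (hb : HasDerivAt b ((-τ) • n s) s)
    (hθ : HasDerivAt θ (-τ) s) :
    HasDerivAt (fun s => Real.cos (θ s) • b s - Real.sin (θ s) • n s)
      ((k * Real.sin (θ s)) • t s) s := by
  refine HasDerivAt.congr_deriv ((hθ.cos.smul hb).sub (hθ.sin.smul hn)) ?_
  module

/-- First order expansion at `v = 0` along a fixed transversal. The functions `P`, `Ps`, `Pv` are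
the `t`-component of `α_s` and its partial derivatives; `hs`, `hv`, `hss`, `hsv`, `hvv` are the
partial derivatives of the height over the ruled part; `p = k cos θ`, `q = k sin θ`. The
coefficients are those of the curvature line equation, with the metric of `α_s = P t + hs N`,
`α_v = w + hv N`. -/
lemma expansion_at_zero (P Ps Pv hs hv hss hsv hvv : ℝ → ℝ) (p q a a' b' Ps' Pv' : ℝ)
    (dP : HasDerivAt P (-p) 0) (P0 : P 0 = 1)
    (dPs : HasDerivAt Ps Ps' 0) (dPv : HasDerivAt Pv Pv' 0)
    (dhs : HasDerivAt hs 0 0) (hs0 : hs 0 = 0) (dhv : HasDerivAt hv a 0) (hv0 : hv 0 = 0)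
    (dhss : HasDerivAt hss 0 0) (hss0 : hss 0 = 0)
    (dhsv : HasDerivAt hsv a' 0) (hsv0 : hsv 0 = 0)
    (dhvv : HasDerivAt hvv b' 0) (hvv0 : hvv 0 = a)
    (E F G e f g Lb Mb Nb : ℝ → ℝ)
    (hE : ∀ v, E v = P v ^ 2 + hs v ^ 2) (hF : ∀ v, F v = hs v * hv v)
    (hG : ∀ v, G v = 1 + hv v ^ 2)
    (he : ∀ v, e v = (P v * ((hss v - P v * q) - hv v * (P v * p)) -
      hs v * (Ps v + hs v * q)) / Real.sqrt (E v * G v - F v ^ 2))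
    (hf : ∀ v, f v = (P v * hsv v - hs v * Pv v) / Real.sqrt (E v * G v - F v ^ 2))
    (hg : ∀ v, g v = (P v * hvv v) / Real.sqrt (E v * G v - F v ^ 2))
    (hLb : ∀ v, Lb v = F v * g v - G v * f v)
    (hMb : ∀ v, Mb v = E v * g v - G v * e v)
    (hNb : ∀ v, Nb v = E v * f v - F v * e v) :
    Lb 0 = 0 ∧ Nb 0 = 0 ∧ Mb 0 = a + q ∧
      HasDerivAt Lb (-a') 0 ∧ HasDerivAt Nb a' 0 ∧
      HasDerivAt Mb (b' - p * a - p * q) 0 := by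
  have E0 : E 0 = 1 := by simp [hE, P0, hs0]
  have F0 : F 0 = 0 := by simp [hF, hs0]
  have G0 : G 0 = 1 := by simp [hG, hv0]
  have dE : HasDerivAt E (-2 * p) 0 := by
    rw [funext hE]
    refine HasDerivAt.congr_deriv ((dP.pow 2).add (dhs.pow 2)) ?_
    rw [P0, hs0]; push_cast; ring
  have dF : HasDerivAt F 0 0 := by
    rw [funext hF]
    refine HasDerivAt.congr_deriv (dhs.mul dhv) ?_
    rw [hs0, hv0]; ring
  have dG : HasDerivAt G 0 0 := by
    rw [funext hG]
    refine HasDerivAt.congr_deriv ((dhv.pow 2).const_add 1) ?_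
    rw [hv0]; push_cast; ring
  have S0 : Real.sqrt (E 0 * G 0 - F 0 ^ 2) = 1 := by simp [E0, F0, G0]
  have dS : HasDerivAt (fun v => Real.sqrt (E v * G v - F v ^ 2)) (-p) 0 := by
    refine HasDerivAt.congr_deriv (((dE.mul dG).sub (dF.pow 2)).sqrt (by simp [E0, F0, G0])) ?_
    simp only [Pi.mul_apply, Pi.sub_apply, Pi.pow_apply]
    rw [S0, E0, F0, G0]; push_cast; ring
  have S0' : Real.sqrt (E 0 * G 0 - F 0 ^ 2) ≠ 0 := by rw [S0]; exact one_ne_zero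
  have e0 : e 0 = -q := by rw [he, S0, P0, hss0, hv0, hs0]; ring
  have f0 : f 0 = 0 := by rw [hf, S0, P0, hsv0, hs0]; ring
  have g0 : g 0 = a := by rw [hg, S0, P0, hvv0]; ring
  have de : HasDerivAt e (p * q - a * p) 0 := by
    rw [funext he]
    refine HasDerivAt.congr_deriv (((dP.mul ((dhss.sub (dP.mul_const q)).sub (dhv.mul (dP.mul_const p)))).sub
      (dhs.mul (dPs.add (dhs.mul_const q)))).div dS S0') ?_
    simp only [Pi.mul_apply, Pi.sub_apply, Pi.add_apply]
    rw [S0, P0, hss0, hv0, hs0]; ring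
  have df : HasDerivAt f a' 0 := by
    rw [funext hf]
    refine HasDerivAt.congr_deriv (((dP.mul dhsv).sub (dhs.mul dPv)).div dS S0') ?_
    simp only [Pi.mul_apply, Pi.sub_apply]
    rw [S0, P0, hsv0, hs0]; ring
  have dg : HasDerivAt g b' 0 := by
    rw [funext hg]
    refine HasDerivAt.congr_deriv ((dP.mul dhvv).div dS S0') ?_
    simp only [Pi.mul_apply]
    rw [S0, P0, hvv0]; ring
  refine ⟨?_, ?_, ?_, ?_, ?_, ?_⟩
  · rw [hLb, F0, f0]; ring
  · rw [hNb, F0, f0]; ring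
  · rw [hMb, E0, G0, e0, g0]; ring
  · rw [funext hLb]
    refine HasDerivAt.congr_deriv ((dF.mul dg).sub (dG.mul df)) ?_
    rw [F0, G0, f0, g0]; ring
  · rw [funext hNb]
    refine HasDerivAt.congr_deriv ((dE.mul df).sub (dF.mul de)) ?_
    rw [E0, F0, f0, e0]; ring
  · rw [funext hMb]
    refine HasDerivAt.congr_deriv ((dE.mul dg).sub (dG.mul de)) ?_
    rw [E0, G0, g0, e0]; ring

/-- A product `v ^ (m + 2) * R v` vanishes to second order at `0`. -/
lemma hasDerivAt_pow_mul_zero (m : ℕ) (R : ℝ → ℝ) (R' : ℝ) (hR : HasDerivAt R R' 0) :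
    HasDerivAt (fun v => v ^ (m + 2) * R v) 0 0 := by
  refine HasDerivAt.congr_deriv ((hasDerivAt_pow (m + 2) (0 : ℝ)).mul hR) ?_
  simp

theorem statement7
    (L : ℝ) (hL : 0 < L)
    (c t n b : ℝ → EuclideanSpace ℝ (Fin 3)) (k τ : ℝ → ℝ)
    (hct : ContDiff ℝ (⊤ : ℕ∞) c) (htt : ContDiff ℝ (⊤ : ℕ∞) t) (hnt : ContDiff ℝ (⊤ : ℕ∞) n)
    (hbt : ContDiff ℝ (⊤ : ℕ∞) b) (hkt : ContDiff ℝ (⊤ : ℕ∞) k) (hτt : ContDiff ℝ (⊤ : ℕ∞) τ)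
    (hcL : Function.Periodic c L) (htL : Function.Periodic t L)
    (hnL : Function.Periodic n L) (hbL : Function.Periodic b L)
    (hkL : Function.Periodic k L) (hτL : Function.Periodic τ L)
    (hkpos : ∀ s, 0 < k s)
    (htc : ∀ s, t s = deriv c s)
    (hunit : ∀ s, ‖t s‖ = 1 ∧ ‖n s‖ = 1 ∧ ‖b s‖ = 1)
    (horth : ∀ s, ⟪t s, n s⟫ = 0 ∧ ⟪t s, b s⟫ = 0 ∧ ⟪n s, b s⟫ = 0)
    (hcross : ∀ s, b s 0 = t s 1 * n s 2 - t s 2 * n s 1 ∧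
      b s 1 = t s 2 * n s 0 - t s 0 * n s 2 ∧
      b s 2 = t s 0 * n s 1 - t s 1 * n s 0)
    (hfr1 : ∀ s, deriv t s = k s • n s)
    (hfr2 : ∀ s, deriv n s = (-(k s)) • t s + τ s • b s)
    (hfr3 : ∀ s, deriv b s = (-(τ s)) • n s)
    (θ : ℝ → ℝ) (hθt : ContDiff ℝ (⊤ : ℕ∞) θ)
    (w N : ℝ → EuclideanSpace ℝ (Fin 3))
    (hw : ∀ s, w s = Real.cos (θ s) • n s + Real.sin (θ s) • b s)
    (hN : ∀ s, N s = Real.cos (θ s) • b s - Real.sin (θ s) • n s)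
    (A B : ℝ → ℝ) (C : ℝ → ℝ → ℝ)
    (hAt : ContDiff ℝ (⊤ : ℕ∞) A) (hBt : ContDiff ℝ (⊤ : ℕ∞) B)
    (hCt : ContDiff ℝ (⊤ : ℕ∞) (Function.uncurry C))
    (hAL : Function.Periodic A L) (hBL : Function.Periodic B L)
    (hCL : ∀ v, Function.Periodic (fun s => C s v) L)
    (hC0 : ∀ s, C s 0 = 0)
    (α : ℝ → ℝ → EuclideanSpace ℝ (Fin 3))
    (hα : ∀ s v, α s v = c s + v • w s +
      (A s * v ^ 2 / 2 + B s * v ^ 3 / 6 + v ^ 4 * C s v) • N s)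
    (hθ' : ∀ s, deriv θ s = -τ s)
    (αs αv αss αsv αvv : ℝ → ℝ → EuclideanSpace ℝ (Fin 3))
    (hαs : ∀ s v, αs s v = deriv (fun u => α u v) s)
    (hαv : ∀ s v, αv s v = deriv (fun u => α s u) v)
    (hαss : ∀ s v, αss s v = deriv (fun u => αs u v) s)
    (hαsv : ∀ s v, αsv s v = deriv (fun u => αs s u) v)
    (hαvv : ∀ s v, αvv s v = deriv (fun u => αv s u) v)
    (Ef Ff Gf : ℝ → ℝ → ℝ)
    (hE : ∀ s v, Ef s v = ⟪αs s v, αs s v⟫)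
    (hF : ∀ s v, Ff s v = ⟪αs s v, αv s v⟫)
    (hG : ∀ s v, Gf s v = ⟪αv s v, αv s v⟫)
    (ef ff gf : ℝ → ℝ → ℝ)
    (he : ∀ s v, ef s v =
      det3 (αs s v) (αv s v) (αss s v) / Real.sqrt (Ef s v * Gf s v - Ff s v ^ 2))
    (hf : ∀ s v, ff s v =
      det3 (αs s v) (αv s v) (αsv s v) / Real.sqrt (Ef s v * Gf s v - Ff s v ^ 2))
    (hg : ∀ s v, gf s v =
      det3 (αs s v) (αv s v) (αvv s v) / Real.sqrt (Ef s v * Gf s v - Ff s v ^ 2))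
    (Lb Mb Nb : ℝ → ℝ → ℝ)
    (hLb : ∀ s v, Lb s v = Ff s v * gf s v - Gf s v * ff s v)
    (hMb : ∀ s v, Mb s v = Ef s v * gf s v - Gf s v * ef s v)
    (hNb : ∀ s v, Nb s v = Ef s v * ff s v - Ff s v * ef s v) :
    ∀ s : ℝ,
      Lb s 0 = 0 ∧ Nb s 0 = 0 ∧
      Mb s 0 = A s + k s * Real.sin (θ s) ∧
      deriv (fun v => Lb s v) 0 = -deriv A s ∧
      deriv (fun v => Nb s v) 0 = deriv A s ∧
      deriv (fun v => Mb s v) 0 =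
        B s - k s * A s * Real.cos (θ s) - k s ^ 2 * Real.sin (θ s) * Real.cos (θ s) := by
  intro s
  have htop : ((⊤ : ℕ∞) : WithTop ℕ∞) ≠ 0 := by simp
  have hder : ∀ f : ℝ → ℝ, ContDiff ℝ (⊤ : ℕ∞) f →
      ContDiff ℝ (⊤ : ℕ∞) (deriv f) ∧ ∀ x, HasDerivAt f (deriv f x) x := fun f hf =>
    ⟨(contDiff_infty_iff_deriv.1 hf).2, fun x => (hf.differentiable htop x).hasDerivAt⟩
  -- The transported frame and its structure equations.
  have dc : ∀ s, HasDerivAt c (t s) s := fun s => by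
    rw [htc]; exact (hct.differentiable htop s).hasDerivAt
  have dt' : ∀ s, HasDerivAt t (k s • n s) s := fun s => by
    rw [← hfr1]; exact (htt.differentiable htop s).hasDerivAt
  have dn : ∀ s, HasDerivAt n ((-(k s)) • t s + τ s • b s) s := fun s => by
    rw [← hfr2]; exact (hnt.differentiable htop s).hasDerivAt
  have db : ∀ s, HasDerivAt b ((-(τ s)) • n s) s := fun s => by
    rw [← hfr3]; exact (hbt.differentiable htop s).hasDerivAt
  have dθ : ∀ s, HasDerivAt θ (-τ s) s := fun s => by
    rw [← hθ']; exact (hθt.differentiable htop s).hasDerivAt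
  obtain ⟨p, hp⟩ : ∃ p : ℝ → ℝ, p = fun s => k s * Real.cos (θ s) := ⟨_, rfl⟩
  obtain ⟨q, hq⟩ : ∃ q : ℝ → ℝ, q = fun s => k s * Real.sin (θ s) := ⟨_, rfl⟩
  have dp := (hder p (by rw [hp]; exact hkt.mul hθt.cos)).2
  have dq := (hder q (by rw [hq]; exact hkt.mul hθt.sin)).2
  have dw : ∀ s, HasDerivAt w ((-p s) • t s) s := fun s => by
    rw [funext hw, hp]; exact frame_w t n b θ (k s) (τ s) s (dn s) (db s) (dθ s)
  have dN : ∀ s, HasDerivAt N (q s • t s) s := fun s => by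
    rw [funext hN, hq]; exact frame_N t n b θ (k s) (τ s) s (dn s) (db s) (dθ s)
  have dt : ∀ s, HasDerivAt t (p s • w s - q s • N s) s := fun s => by
    refine HasDerivAt.congr_deriv (dt' s) ?_
    have hkn : k s • n s = (k s * (Real.cos (θ s) ^ 2 + Real.sin (θ s) ^ 2)) • n s := by
      rw [Real.cos_sq_add_sin_sq, mul_one]
    rw [hkn, hw, hN, hp, hq]
    module
  -- The height function `h` and its partial derivatives.
  obtain ⟨Cs, Cv, hCs, hCv, dCs, dCv⟩ := exists_partials C hCt
  obtain ⟨Css, Csv, hCss, hCsv, dCss, dCsv⟩ := exists_partials Cs hCs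
  obtain ⟨-, Cvv, -, hCvv, -, dCvv⟩ := exists_partials Cv hCv
  obtain ⟨-, Cssv, -, -, -, dCssv⟩ := exists_partials Css hCss
  obtain ⟨-, Csvv, -, -, -, dCsvv⟩ := exists_partials Csv hCsv
  obtain ⟨-, Cvvv, -, -, -, dCvvv⟩ := exists_partials Cvv hCvv
  obtain ⟨hA1, dA⟩ := hder A hAt
  obtain ⟨hB1, dB⟩ := hder B hBt
  have dA1 := (hder _ hA1).2
  have dB1 := (hder _ hB1).2
  obtain ⟨h, hh⟩ : ∃ h : ℝ → ℝ → ℝ, h = fun s v =>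
    A s * v ^ 2 / 2 + B s * v ^ 3 / 6 + v ^ 4 * C s v := ⟨_, rfl⟩
  obtain ⟨hs, hhs⟩ : ∃ hs : ℝ → ℝ → ℝ, hs = fun s v =>
    deriv A s * v ^ 2 / 2 + deriv B s * v ^ 3 / 6 + v ^ 4 * Cs s v := ⟨_, rfl⟩
  obtain ⟨hv, hhv⟩ : ∃ hv : ℝ → ℝ → ℝ, hv = fun s v =>
    A s * v + B s * v ^ 2 / 2 + (v ^ 3 * (4 * C s v) + v ^ 4 * Cv s v) := ⟨_, rfl⟩
  obtain ⟨hss, hhss⟩ : ∃ hss : ℝ → ℝ → ℝ, hss = fun s v =>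
    deriv (deriv A) s * v ^ 2 / 2 + deriv (deriv B) s * v ^ 3 / 6 + v ^ 4 * Css s v := ⟨_, rfl⟩
  obtain ⟨hsv, hhsv⟩ : ∃ hsv : ℝ → ℝ → ℝ, hsv = fun s v =>
    deriv A s * v + deriv B s * v ^ 2 / 2 + (v ^ 3 * (4 * Cs s v) + v ^ 4 * Csv s v) := ⟨_, rfl⟩
  obtain ⟨hvv, hhvv⟩ : ∃ hvv : ℝ → ℝ → ℝ, hvv = fun s v =>
    A s + B s * v + (v ^ 2 * (12 * C s v) + v ^ 3 * (8 * Cv s v) + v ^ 4 * Cvv s v) := ⟨_, rfl⟩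
  have dh_s : ∀ s v, HasDerivAt (fun u => h u v) (hs s v) s := fun s v => by
    rw [hh, hhs]
    exact ((((dA s).mul_const _).div_const _).add (((dB s).mul_const _).div_const _)).add
      ((dCs s v).const_mul _)
  have dhs_s : ∀ s v, HasDerivAt (fun u => hs u v) (hss s v) s := fun s v => by
    rw [hhs, hhss]
    exact ((((dA1 s).mul_const _).div_const _).add (((dB1 s).mul_const _).div_const _)).add
      ((dCss s v).const_mul _)
  have dh_v : ∀ s v, HasDerivAt (fun u => h s u) (hv s v) v := fun s v => by
    rw [hh, hhv]
    refine HasDerivAt.congr_deriv (((((hasDerivAt_pow 2 v).const_mul (A s)).div_const 2).add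
      (((hasDerivAt_pow 3 v).const_mul (B s)).div_const 6)).add
      ((hasDerivAt_pow 4 v).mul (dCv s v))) ?_
    push_cast; ring
  have dhs_v : ∀ s v, HasDerivAt (fun u => hs s u) (hsv s v) v := fun s v => by
    rw [hhs, hhsv]
    refine HasDerivAt.congr_deriv (((((hasDerivAt_pow 2 v).const_mul (deriv A s)).div_const 2).add
      (((hasDerivAt_pow 3 v).const_mul (deriv B s)).div_const 6)).add
      ((hasDerivAt_pow 4 v).mul (dCsv s v))) ?_
    push_cast; ring
  have dhv_v : ∀ s v, HasDerivAt (fun u => hv s u) (hvv s v) v := fun s v => by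
    rw [hhv, hhvv]
    refine HasDerivAt.congr_deriv ((((hasDerivAt_id v).const_mul (A s)).add
      (((hasDerivAt_pow 2 v).const_mul (B s)).div_const 2)).add
      (((hasDerivAt_pow 3 v).mul ((dCv s v).const_mul 4)).add
        ((hasDerivAt_pow 4 v).mul (dCvv s v)))) ?_
    push_cast; ring
  -- The `t`-component `P` of `α_s` and its partial derivatives.
  obtain ⟨P, hP⟩ : ∃ P : ℝ → ℝ → ℝ, P = fun s v => 1 - v * p s + h s v * q s := ⟨_, rfl⟩
  obtain ⟨Ps, hPs⟩ : ∃ Ps : ℝ → ℝ → ℝ, Ps = fun s v =>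
    -(v * deriv p s) + (hs s v * q s + h s v * deriv q s) := ⟨_, rfl⟩
  obtain ⟨Pv, hPv⟩ : ∃ Pv : ℝ → ℝ → ℝ, Pv = fun s v => -p s + hv s v * q s := ⟨_, rfl⟩
  have dP_s : ∀ s v, HasDerivAt (fun u => P u v) (Ps s v) s := fun s v => by
    rw [hP, hPs]
    exact (((dp s).const_mul v).const_sub 1).add ((dh_s s v).mul (dq s))
  have dP_v : ∀ s v, HasDerivAt (fun u => P s u) (Pv s v) v := fun s v => by
    rw [hP, hPv]
    refine HasDerivAt.congr_deriv ((((hasDerivAt_id v).mul_const (p s)).const_sub 1).add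
      ((dh_v s v).mul_const (q s))) ?_
    ring
  -- Derivatives of `α` in the frame `(t, w, N)`.
  have hα' : α = fun s v => c s + v • w s + h s v • N s := by
    funext s v; rw [hα, hh]
  have as : ∀ s v, αs s v = P s v • t s + hs s v • N s := fun s v => by
    rw [hαs, hα']
    refine (((dc s).add ((dw s).const_smul v)).add ((dh_s s v).smul (dN s))).deriv.trans ?_
    rw [hP]; module
  have av : ∀ s v, αv s v = w s + hv s v • N s := fun s v => by
    rw [hαv, hα']
    refine ((((hasDerivAt_id v).smul_const (w s)).const_add (c s)).add
      ((dh_v s v).smul_const (N s))).deriv.trans ?_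
    module
  have ass : ∀ s v, αss s v = (Ps s v + hs s v * q s) • t s + (P s v * p s) • w s +
      (hss s v - P s v * q s) • N s := fun s v => by
    rw [hαss]; simp only [as]
    refine (((dP_s s v).smul (dt s)).add ((dhs_s s v).smul (dN s))).deriv.trans ?_
    module
  have asv : ∀ s v, αsv s v = Pv s v • t s + (0 : ℝ) • w s + hsv s v • N s := fun s v => by
    rw [hαsv]; simp only [as]
    refine (((dP_v s v).smul_const (t s)).add ((dhs_v s v).smul_const (N s))).deriv.trans ?_
    module
  have avv : ∀ s v, αvv s v = (0 : ℝ) • t s + (0 : ℝ) • w s + hvv s v • N s := fun s v => by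
    rw [hαvv]; simp only [av]
    refine (((dhv_v s v).smul_const (N s)).const_add (w s)).deriv.trans ?_
    module
  obtain ⟨itt, iww, iNN, itw, itN, iwN, hdet⟩ := frame_orthonormal (t s) (n s) (b s) (θ s)
    (hunit s) (horth s) (hcross s) (w s) (N s) (hw s) (hN s)
  have iNt : ⟪N s, t s⟫ = 0 := by rw [real_inner_comm]; exact itN
  have iNw : ⟪N s, w s⟫ = 0 := by rw [real_inner_comm]; exact iwN
  have key := expansion_at_zero (P s) (Ps s) (Pv s) (hs s) (hv s) (hss s) (hsv s) (hvv s)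
    (p s) (q s) (A s) (deriv A s) (B s)
    (-deriv p s) (A s * q s)
    (by refine HasDerivAt.congr_deriv (dP_v s 0) ?_; simp [hPv, hhv])
    (by simp [hP, hh])
    (by
      rw [hPs]
      refine HasDerivAt.congr_deriv ((((hasDerivAt_id (0 : ℝ)).mul_const (deriv p s)).neg).add
        (((dhs_v s 0).mul_const (q s)).add ((dh_v s 0).mul_const (deriv q s)))) ?_
      simp [hhsv, hhv])
    (by
      rw [hPv]
      refine HasDerivAt.congr_deriv (((dhv_v s 0).mul_const (q s)).const_add (-p s)) ?_
      simp [hhvv])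
    (by refine HasDerivAt.congr_deriv (dhs_v s 0) ?_; simp [hhsv])
    (by simp [hhs])
    (by refine HasDerivAt.congr_deriv (dhv_v s 0) ?_; simp [hhvv])
    (by simp [hhv])
    (by
      rw [hhss]
      refine HasDerivAt.congr_deriv (((((hasDerivAt_pow 2 (0 : ℝ)).const_mul (deriv (deriv A) s)).div_const 2).add
        (((hasDerivAt_pow 3 (0 : ℝ)).const_mul (deriv (deriv B) s)).div_const 6)).add
        (hasDerivAt_pow_mul_zero 2 _ _ (dCssv s 0))) ?_
      simp)
    (by simp [hhss])
    (by
      rw [hhsv]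
      refine HasDerivAt.congr_deriv ((((hasDerivAt_id (0 : ℝ)).const_mul (deriv A s)).add
        (((hasDerivAt_pow 2 (0 : ℝ)).const_mul (deriv B s)).div_const 2)).add
        ((hasDerivAt_pow_mul_zero 1 _ _ ((dCsv s 0).const_mul 4)).add
          (hasDerivAt_pow_mul_zero 2 _ _ (dCsvv s 0)))) ?_
      simp)
    (by simp [hhsv])
    (by
      rw [hhvv]
      refine HasDerivAt.congr_deriv ((((hasDerivAt_id (0 : ℝ)).const_mul (B s)).const_add (A s)).add
        (((hasDerivAt_pow_mul_zero 0 _ _ ((dCv s 0).const_mul 12)).add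
          (hasDerivAt_pow_mul_zero 1 _ _ ((dCvv s 0).const_mul 8))).add
          (hasDerivAt_pow_mul_zero 2 _ _ (dCvvv s 0)))) ?_
      simp)
    (by simp [hhvv])
    (Ef s) (Ff s) (Gf s) (ef s) (ff s) (gf s) (Lb s) (Mb s) (Nb s)
    (fun v => by
      rw [hE, as]
      simp only [inner_add_left, inner_add_right, real_inner_smul_left, real_inner_smul_right,
        itt, iNN, itN, iNt]
      ring)
    (fun v => by
      rw [hF, as, av]
      simp only [inner_add_left, inner_add_right, real_inner_smul_left, real_inner_smul_right,
        itw, iNN, itN, iNw]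
      ring)
    (fun v => by
      rw [hG, av]
      simp only [inner_add_left, inner_add_right, real_inner_smul_left, real_inner_smul_right,
        iww, iNN, iwN, iNw]
      ring)
    (fun v => by rw [he, as, av, ass, det3_frame_s7, hdet, mul_one])
    (fun v => by
      rw [hf, as, av, asv, det3_frame_s7, hdet]
      congr 1; ring)
    (fun v => by
      rw [hg, as, av, avv, det3_frame_s7, hdet]
      congr 1; ring)
    (hLb s) (hMb s) (hNb s)
  obtain ⟨L0, N0, M0, dL, dNb, dM⟩ := key
  refine ⟨L0, N0, ?_, dL.deriv, dNb.deriv, ?_⟩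
  · rw [M0, hq]
  · rw [dM.deriv, hp, hq]; ring
end

section
/- Assume θ'(s) = −τ(s) for all s. A point (s,0) of the surface α is umbilic, i.e. (Fg − Gf)(s,0) = 0, (Eg − Ge)(s,0) = 0 and (Ef − Fe)(s,0) = 0 simultaneously, if and only if A(s) + k(s) sin θ(s) = 0. -/
/-!
At `v = 0` the surface has `α_s = t` and `α_v = w`, so `(t, w, N)` is a positively oriented orthonormal
frame there, `E = G = 1`, `F = 0`, and `det[α_s, α_v, X] = ⟨N, X⟩` (`det3_frame`). Since `θ' = -τ`,
the Frenet equations give `w' = -k cos θ t`. All terms of `α` beyond the linear one carry a factor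
`v²`, hence at `v = 0` one has `α_ss = k n`, `α_sv = w'`, `α_vv = A N`, and therefore
`e = -k sin θ`, `f = 0`, `g = A`. The first and third umbilic equations are then trivial and the
second one reads `A + k sin θ = 0`.
-/

open Real intervalIntegral
open scoped RealInnerProductSpace

/-- In an orthonormal frame `(t, n, t × n)`, the determinant of `t`, a vector of the normal plane and
`x t + y n + z b`. -/
lemma det3_frame_s8 {t n b : EuclideanSpace ℝ (Fin 3)}
    (ht : ‖t‖ = 1) (hn : ‖n‖ = 1) (htn : ⟪t, n⟫ = 0)
    (hb0 : b 0 = t 1 * n 2 - t 2 * n 1) (hb1 : b 1 = t 2 * n 0 - t 0 * n 2)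
    (hb2 : b 2 = t 0 * n 1 - t 1 * n 0) (p q x y z : ℝ) :
    det3 t (p • n + q • b) (x • t + y • n + z • b) = p * z - q * y := by
  have e1 : t 0 * t 0 + t 1 * t 1 + t 2 * t 2 = 1 := by
    have h : ⟪t, t⟫ = 1 := by rw [real_inner_self_eq_norm_sq, ht]; norm_num
    rw [PiLp.inner_apply] at h
    simpa only [Fin.sum_univ_three, RCLike.inner_apply, conj_trivial] using h
  have e2 : n 0 * n 0 + n 1 * n 1 + n 2 * n 2 = 1 := by
    have h : ⟪n, n⟫ = 1 := by rw [real_inner_self_eq_norm_sq, hn]; norm_num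
    rw [PiLp.inner_apply] at h
    simpa only [Fin.sum_univ_three, RCLike.inner_apply, conj_trivial] using h
  have e3 : n 0 * t 0 + n 1 * t 1 + n 2 * t 2 = 0 := by
    simpa [PiLp.inner_apply, Fin.sum_univ_three] using htn
  -- Lagrange's identity: `|t × n|² = |t|² |n|² - ⟨t, n⟩² = 1`.
  have e4 : (t 1 * n 2 - t 2 * n 1) ^ 2 + (t 2 * n 0 - t 0 * n 2) ^ 2
      + (t 0 * n 1 - t 1 * n 0) ^ 2 = 1 := by
    linear_combination (n 0 * n 0 + n 1 * n 1 + n 2 * n 2) * e1 + e2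
      - (n 0 * t 0 + n 1 * t 1 + n 2 * t 2) * e3
  simp only [det3, Matrix.det_fin_three, Matrix.of_apply, Matrix.cons_val_zero,
    Matrix.cons_val_one, Matrix.cons_val, PiLp.add_apply, PiLp.smul_apply, smul_eq_mul,
    hb0, hb1, hb2]
  linear_combination (p * z - q * y) * e4

theorem statement8
    (L : ℝ) (hL : 0 < L)
    (c t n b : ℝ → EuclideanSpace ℝ (Fin 3)) (k τ : ℝ → ℝ)
    (hct : ContDiff ℝ (⊤ : ℕ∞) c) (htt : ContDiff ℝ (⊤ : ℕ∞) t) (hnt : ContDiff ℝ (⊤ : ℕ∞) n)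
    (hbt : ContDiff ℝ (⊤ : ℕ∞) b) (hkt : ContDiff ℝ (⊤ : ℕ∞) k) (hτt : ContDiff ℝ (⊤ : ℕ∞) τ)
    (hcL : Function.Periodic c L) (htL : Function.Periodic t L)
    (hnL : Function.Periodic n L) (hbL : Function.Periodic b L)
    (hkL : Function.Periodic k L) (hτL : Function.Periodic τ L)
    (hkpos : ∀ s, 0 < k s)
    (htc : ∀ s, t s = deriv c s)
    (hunit : ∀ s, ‖t s‖ = 1 ∧ ‖n s‖ = 1 ∧ ‖b s‖ = 1)
    (horth : ∀ s, ⟪t s, n s⟫ = 0 ∧ ⟪t s, b s⟫ = 0 ∧ ⟪n s, b s⟫ = 0)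
    (hcross : ∀ s, b s 0 = t s 1 * n s 2 - t s 2 * n s 1 ∧
      b s 1 = t s 2 * n s 0 - t s 0 * n s 2 ∧
      b s 2 = t s 0 * n s 1 - t s 1 * n s 0)
    (hfr1 : ∀ s, deriv t s = k s • n s)
    (hfr2 : ∀ s, deriv n s = (-(k s)) • t s + τ s • b s)
    (hfr3 : ∀ s, deriv b s = (-(τ s)) • n s)
    (θ : ℝ → ℝ) (hθt : ContDiff ℝ (⊤ : ℕ∞) θ)
    (w N : ℝ → EuclideanSpace ℝ (Fin 3))
    (hw : ∀ s, w s = Real.cos (θ s) • n s + Real.sin (θ s) • b s)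
    (hN : ∀ s, N s = Real.cos (θ s) • b s - Real.sin (θ s) • n s)
    (A B : ℝ → ℝ) (C : ℝ → ℝ → ℝ)
    (hAt : ContDiff ℝ (⊤ : ℕ∞) A) (hBt : ContDiff ℝ (⊤ : ℕ∞) B)
    (hCt : ContDiff ℝ (⊤ : ℕ∞) (Function.uncurry C))
    (hAL : Function.Periodic A L) (hBL : Function.Periodic B L)
    (hCL : ∀ v, Function.Periodic (fun s => C s v) L)
    (hC0 : ∀ s, C s 0 = 0)
    (α : ℝ → ℝ → EuclideanSpace ℝ (Fin 3))
    (hα : ∀ s v, α s v = c s + v • w s +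
      (A s * v ^ 2 / 2 + B s * v ^ 3 / 6 + v ^ 4 * C s v) • N s)
    (hθ' : ∀ s, deriv θ s = -τ s)
    (αs αv αss αsv αvv : ℝ → ℝ → EuclideanSpace ℝ (Fin 3))
    (hαs : ∀ s v, αs s v = deriv (fun u => α u v) s)
    (hαv : ∀ s v, αv s v = deriv (fun u => α s u) v)
    (hαss : ∀ s v, αss s v = deriv (fun u => αs u v) s)
    (hαsv : ∀ s v, αsv s v = deriv (fun u => αs s u) v)
    (hαvv : ∀ s v, αvv s v = deriv (fun u => αv s u) v)
    (Ef Ff Gf : ℝ → ℝ → ℝ)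
    (hE : ∀ s v, Ef s v = ⟪αs s v, αs s v⟫)
    (hF : ∀ s v, Ff s v = ⟪αs s v, αv s v⟫)
    (hG : ∀ s v, Gf s v = ⟪αv s v, αv s v⟫)
    (ef ff gf : ℝ → ℝ → ℝ)
    (he : ∀ s v, ef s v =
      det3 (αs s v) (αv s v) (αss s v) / Real.sqrt (Ef s v * Gf s v - Ff s v ^ 2))
    (hf : ∀ s v, ff s v =
      det3 (αs s v) (αv s v) (αsv s v) / Real.sqrt (Ef s v * Gf s v - Ff s v ^ 2))
    (hg : ∀ s v, gf s v =
      det3 (αs s v) (αv s v) (αvv s v) / Real.sqrt (Ef s v * Gf s v - Ff s v ^ 2))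
    :
    ∀ s : ℝ,
      (Ff s 0 * gf s 0 - Gf s 0 * ff s 0 = 0 ∧
       Ef s 0 * gf s 0 - Gf s 0 * ef s 0 = 0 ∧
       Ef s 0 * ff s 0 - Ff s 0 * ef s 0 = 0) ↔
      A s + k s * Real.sin (θ s) = 0 := by
  have top_ne : ((⊤ : ℕ∞) : WithTop ℕ∞) ≠ 0 := by simp
  have dc : ∀ s, HasDerivAt c (t s) s := fun s => by
    rw [htc]; exact (hct.differentiable top_ne s).hasDerivAt
  have dn : ∀ s, HasDerivAt n ((-(k s)) • t s + τ s • b s) s := fun s => by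
    rw [← hfr2]; exact (hnt.differentiable top_ne s).hasDerivAt
  have db : ∀ s, HasDerivAt b ((-(τ s)) • n s) s := fun s => by
    rw [← hfr3]; exact (hbt.differentiable top_ne s).hasDerivAt
  have dθ : ∀ s, HasDerivAt θ (-τ s) s := fun s => by
    rw [← hθ']; exact (hθt.differentiable top_ne s).hasDerivAt
  -- The choice `θ' = -τ` makes `w` parallel along `c` in the normal bundle: `w'` is tangent to `c`.
  have dw : ∀ s, HasDerivAt w ((-(k s * Real.cos (θ s))) • t s) s := fun s => by
    have h := ((dθ s).cos.smul (dn s)).add ((dθ s).sin.smul (db s))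
    have hfun : w = ((fun x => Real.cos (θ x)) • n + (fun x => Real.sin (θ x)) • b) :=
      funext fun x => hw x
    rw [hfun]
    refine h.congr_deriv ?_
    module
  have hNd : Differentiable ℝ N := by
    have hfun : N = fun x => Real.cos (θ x) • b x - Real.sin (θ x) • n x := funext hN
    have h1 := hθt.differentiable top_ne
    have h2 := hbt.differentiable top_ne
    have h3 := hnt.differentiable top_ne
    rw [hfun]
    fun_prop
  have dN : ∀ s, HasDerivAt N (deriv N s) s := fun s => (hNd s).hasDerivAt
  have dA : ∀ s, HasDerivAt A (deriv A s) s := fun s => (hAt.differentiable top_ne s).hasDerivAt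
  have dB : ∀ s, HasDerivAt B (deriv B s) s := fun s => (hBt.differentiable top_ne s).hasDerivAt
  have hfC : Differentiable ℝ (fderiv ℝ (Function.uncurry C)) :=
    (hCt.fderiv_right (m := 1) (by norm_cast)).differentiable one_ne_zero
  have dCs : ∀ s v, HasDerivAt (fun u => C u v) (fderiv ℝ (Function.uncurry C) (s, v) (1, 0)) s :=
    fun s v => HasFDerivAt.comp_hasDerivAt (f := fun u : ℝ => (u, v)) s
      (hCt.differentiable top_ne (s, v)).hasFDerivAt
      ((hasDerivAt_id s).prodMk (hasDerivAt_const s v))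
  have dCv : ∀ s v, HasDerivAt (fun u => C s u) (fderiv ℝ (Function.uncurry C) (s, v) (0, 1)) v :=
    fun s v => (hCt.differentiable top_ne (s, v)).hasFDerivAt.comp_hasDerivAt v
      ((hasDerivAt_const v s).prodMk (hasDerivAt_id v))
  have dfC : ∀ (s v : ℝ) (e : ℝ × ℝ),
      DifferentiableAt ℝ (fun u => fderiv ℝ (Function.uncurry C) (s, u) e) v := by
    intro s v e
    have h : Differentiable ℝ (fun u : ℝ => fderiv ℝ (Function.uncurry C) (s, u)) :=
      hfC.comp (differentiable_const s |>.prodMk differentiable_id)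
    exact (h v).clm_apply (differentiableAt_const e)
  have hsEq : ∀ s v, αs s v = t s + v • ((-(k s * Real.cos (θ s))) • t s) +
      v ^ 2 • ((A s / 2 + B s * v / 6 + v ^ 2 * C s v) • deriv N s +
        (deriv A s / 2 + deriv B s * v / 6 +
          v ^ 2 * fderiv ℝ (Function.uncurry C) (s, v) (1, 0)) • N s) := by
    intro s v
    rw [hαs]
    have hfun : (fun u => α u v) = fun u => c u + v • w u +
      (A u * v ^ 2 / 2 + B u * v ^ 3 / 6 + v ^ 4 * C u v) • N u := funext fun u => hα u v
    rw [hfun]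
    have h := ((dc s).add ((dw s).const_smul v)).add
      ((((((dA s).mul_const (v ^ 2)).div_const 2).add
        (((dB s).mul_const (v ^ 3)).div_const 6)).add ((dCs s v).const_mul (v ^ 4))).smul (dN s))
    refine (h.congr_deriv ?_).deriv
    simp only [Pi.add_apply]
    module
  have hvEq : ∀ s v, αv s v = w s + (v * A s + v ^ 2 * (B s / 2 + 4 * v * C s v +
      v ^ 2 * fderiv ℝ (Function.uncurry C) (s, v) (0, 1))) • N s := by
    intro s v
    rw [hαv]
    have hfun : (fun u => α s u) = fun u => c s + u • w s +
      (A s * u ^ 2 / 2 + B s * u ^ 3 / 6 + u ^ 4 * C s u) • N s := funext fun u => hα s u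
    rw [hfun]
    have h := (((hasDerivAt_id v).smul_const (w s)).const_add (c s)).add
      (((((((hasDerivAt_id v).pow 2).const_mul (A s)).div_const 2).add
        ((((hasDerivAt_id v).pow 3).const_mul (B s)).div_const 6)).add
        (((hasDerivAt_id v).pow 4).mul (dCv s v))).smul_const (N s))
    refine (h.congr_deriv ?_).deriv
    simp only [id, Pi.pow_apply]
    push_cast
    module
  intro s
  have hs0 : ∀ u, αs u 0 = t u := fun u => by rw [hsEq]; simp
  have hv0 : αv s 0 = w s := by rw [hvEq]; simp
  have hss0 : αss s 0 = k s • n s := by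
    rw [hαss, funext hs0, hfr1]
  -- A differentiable remainder multiplied by `v ^ 2` contributes nothing to the derivative at `0`.
  have hsv0 : αsv s 0 = (-(k s * Real.cos (θ s))) • t s := by
    rw [hαsv, funext (hsEq s)]
    have hR : DifferentiableAt ℝ (fun v : ℝ =>
        (A s / 2 + B s * v / 6 + v ^ 2 * C s v) • deriv N s +
        (deriv A s / 2 + deriv B s * v / 6 +
          v ^ 2 * fderiv ℝ (Function.uncurry C) (s, v) (1, 0)) • N s) 0 := by
      have h1 := (dCv s 0).differentiableAt
      have h2 := dfC s 0 (1, 0)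
      fun_prop
    have h := (((hasDerivAt_id (0 : ℝ)).smul_const ((-(k s * Real.cos (θ s))) • t s)).const_add
      (t s)).add (((hasDerivAt_id (0 : ℝ)).pow 2).smul hR.hasDerivAt)
    refine (h.congr_deriv ?_).deriv
    simp
  have hvv0 : αvv s 0 = A s • N s := by
    rw [hαvv, funext (hvEq s)]
    have hR : DifferentiableAt ℝ (fun v : ℝ => B s / 2 + 4 * v * C s v +
        v ^ 2 * fderiv ℝ (Function.uncurry C) (s, v) (0, 1)) 0 := by
      have h1 := (dCv s 0).differentiableAt
      have h2 := dfC s 0 (0, 1)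
      fun_prop
    have h := ((((hasDerivAt_id (0 : ℝ)).mul_const (A s)).add
      (((hasDerivAt_id (0 : ℝ)).pow 2).mul hR.hasDerivAt)).smul_const (N s)).const_add (w s)
    refine (h.congr_deriv ?_).deriv
    simp
  obtain ⟨ut, un, ub⟩ := hunit s
  obtain ⟨otn, otb, onb⟩ := horth s
  obtain ⟨c0, c1, c2⟩ := hcross s
  have hdet := det3_frame_s8 ut un otn c0 c1 c2 (Real.cos (θ s)) (Real.sin (θ s))
  have hcs := Real.cos_sq_add_sin_sq (θ s)
  have hE0 : Ef s 0 = 1 := by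
    rw [hE, hs0, real_inner_self_eq_norm_sq, ut]; norm_num
  have hF0 : Ff s 0 = 0 := by
    rw [hF, hs0, hv0, hw, inner_add_right, inner_smul_right, inner_smul_right, otn, otb]; simp
  have hG0 : Gf s 0 = 1 := by
    have hbn : ⟪b s, n s⟫ = 0 := by rw [real_inner_comm]; exact onb
    have hnn : ⟪n s, n s⟫ = 1 := by rw [real_inner_self_eq_norm_sq, un]; norm_num
    have hbb : ⟪b s, b s⟫ = 1 := by rw [real_inner_self_eq_norm_sq, ub]; norm_num
    rw [hG, hv0, hw]
    simp only [inner_add_left, inner_add_right, real_inner_smul_left, real_inner_smul_right,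
      hnn, hbb, onb, hbn]
    linear_combination hcs
  have he0 : ef s 0 = -(k s * Real.sin (θ s)) := by
    have h := hdet 0 (k s) 0
    simp only [zero_smul, zero_add, add_zero] at h
    rw [he, hE0, hF0, hG0, hs0, hv0, hss0, hw, h]
    norm_num
    ring
  have hf0 : ff s 0 = 0 := by
    have h := hdet (-(k s * Real.cos (θ s))) 0 0
    simp only [zero_smul, add_zero] at h
    rw [hf, hs0, hv0, hsv0, hw, h]
    simp
  have hg0 : gf s 0 = A s := by
    have h := hdet 0 (-(A s * Real.sin (θ s))) (A s * Real.cos (θ s))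
    have hAN : A s • N s = (0 : ℝ) • t s + (-(A s * Real.sin (θ s))) • n s +
        (A s * Real.cos (θ s)) • b s := by
      rw [hN]; module
    rw [hg, hE0, hF0, hG0, hs0, hv0, hvv0, hAN, hw, h]
    norm_num
    linear_combination A s * hcs
  rw [hE0, hF0, hG0, he0, hf0, hg0]
  constructor
  · rintro ⟨-, h, -⟩
    linarith
  · intro h
    refine ⟨by ring, by linarith, by ring⟩
end

section
/- Assume θ'(s) = −τ(s) for all s and that A(s) + k(s) sin θ(s) ≠ 0 for all s. Then the function h(s,v) = −(Ef − Fe)(s,v)/(Eg − Ge)(s,v) is well defined for v near 0, satisfies h(s,0) = 0, and ∂h/∂v(s,0) = −A'(s)/(A(s) + k(s) sin θ(s)) for every s. -/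
/-!
Since `θ' = -τ`, the frame `(t, w, N)` is relatively parallel: `w' = -k cos θ • t` and
`N' = k sin θ • t`. Writing `p(s,v)` for the coefficient of `N` in `α` and
`m = 1 - v k cos θ + p k sin θ`, the first partial derivatives are
`α_s = m t + p_s N` and `α_v = w + p_v N`, so all coefficients of the fundamental forms are
explicit in the positively oriented orthonormal frame `(t, w, N)` (`det3_frame`).
The factor `√(EG - F²)` equals `1` at `v = 0` and cancels from the quotient `h` near `v = 0`.
As `p_s = A' v² / 2 + O(v³)` and `p_v = A v + O(v²)`, the numerator `Ef - Fe` is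
`A' v + O(v²)`, while the denominator `Eg - Ge` tends to `A + k sin θ`; this last step is
`principal_quotient`.
-/

open Real intervalIntegral
open scoped RealInnerProductSpace

open scoped ContDiff

lemma contDiff_partial_left {f : ℝ → ℝ → ℝ} (hf : ContDiff ℝ ∞ (Function.uncurry f)) :
    ContDiff ℝ ∞ (Function.uncurry fun s v => deriv (fun u => f u v) s) := by
  have key : (Function.uncurry fun s v => deriv (fun u => f u v) s) =
      fun x : ℝ × ℝ => fderiv ℝ (Function.uncurry f) x (1, 0) := by
    funext ⟨s, v⟩
    have h1 : HasDerivAt (fun u : ℝ => (u, v)) ((1 : ℝ), (0 : ℝ)) s :=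
      (hasDerivAt_id s).prodMk (hasDerivAt_const s v)
    have h2 := ((hf.differentiable (by simp)) (s, v)).hasFDerivAt
    exact (h2.comp_hasDerivAt s h1).deriv
  rw [key]
  exact (hf.fderiv_right (m := ∞) (by simp)).clm_apply contDiff_const

lemma hasDerivAt_partial_left {f : ℝ → ℝ → ℝ} (hf : ContDiff ℝ ∞ (Function.uncurry f))
    (s v : ℝ) : HasDerivAt (fun u => f u v) (deriv (fun u => f u v) s) s := by
  have h1 : ContDiff ℝ ∞ fun u => f u v :=
    hf.comp (contDiff_id.prodMk contDiff_const)
  exact (h1.differentiable (by simp) s).hasDerivAt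

lemma contDiff_slice_right {f : ℝ → ℝ → ℝ} (hf : ContDiff ℝ ∞ (Function.uncurry f))
    (s : ℝ) : ContDiff ℝ ∞ (f s) :=
  hf.comp (contDiff_const.prodMk contDiff_id)

lemma hasDerivAt_of_contDiff {F : Type*} [NormedAddCommGroup F] [NormedSpace ℝ F] {f : ℝ → F}
    (hf : ContDiff ℝ ∞ f) (s : ℝ) : HasDerivAt f (deriv f s) s :=
  (hf.differentiable (by simp) s).hasDerivAt

lemma contDiff_deriv {f : ℝ → ℝ} (hf : ContDiff ℝ ∞ f) : ContDiff ℝ ∞ (deriv f) :=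
  (contDiff_infty_iff_deriv.1 hf).2

/-- The determinant of three vectors given by coordinates in a frame obtained from a positively
oriented orthonormal frame `(t, n, b)` by rotating `(n, b)` through the angle `φ`. -/
lemma det3_frame_s10 (t n b w N : EuclideanSpace ℝ (Fin 3)) (φ : ℝ) (hb : ‖b‖ = 1)
    (hcross : b 0 = t 1 * n 2 - t 2 * n 1 ∧ b 1 = t 2 * n 0 - t 0 * n 2 ∧
      b 2 = t 0 * n 1 - t 1 * n 0)
    (hw : w = Real.cos φ • n + Real.sin φ • b) (hN : N = Real.cos φ • b - Real.sin φ • n)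
    (m q r x y z : ℝ) :
    det3 (m • t + q • N) (w + r • N) (x • t + y • w + z • N) = m * (z - r * y) - q * x := by
  obtain ⟨h0, h1, h2⟩ := hcross
  have hb2 : b 0 * (t 1 * n 2 - t 2 * n 1) + b 1 * (t 2 * n 0 - t 0 * n 2) +
      b 2 * (t 0 * n 1 - t 1 * n 0) = 1 := by
    have h3 := EuclideanSpace.real_norm_sq_eq b
    rw [hb, Fin.sum_univ_three] at h3
    rw [← h0, ← h1, ← h2]
    linarith
  have hcs := Real.sin_sq_add_cos_sq φ
  subst hw hN
  simp only [det3, Matrix.det_fin_three, Matrix.of_apply, Matrix.cons_val_zero,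
    Matrix.cons_val_one, Matrix.cons_val, PiLp.add_apply, PiLp.sub_apply, PiLp.smul_apply,
    smul_eq_mul]
  linear_combination (m * (z - r * y) - q * x) *
    ((Real.sin φ ^ 2 + Real.cos φ ^ 2) * hb2 + hcs)

/-- The first fundamental form of vectors `α_s = m t + q N`, `α_v = w + r N`, where `(t, w, N)` is
obtained from an orthonormal frame `(t, n, b)` by rotating `(n, b)` through the angle `φ`. -/
lemma inner_frame (t n b w N : EuclideanSpace ℝ (Fin 3)) (φ : ℝ)
    (hu : ‖t‖ = 1 ∧ ‖n‖ = 1 ∧ ‖b‖ = 1)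
    (ho : ⟪t, n⟫ = 0 ∧ ⟪t, b⟫ = 0 ∧ ⟪n, b⟫ = 0)
    (hw : w = Real.cos φ • n + Real.sin φ • b) (hN : N = Real.cos φ • b - Real.sin φ • n)
    (m q r : ℝ) :
    ⟪m • t + q • N, m • t + q • N⟫ = m ^ 2 + q ^ 2 ∧
    ⟪m • t + q • N, w + r • N⟫ = q * r ∧
    ⟪w + r • N, w + r • N⟫ = 1 + r ^ 2 := by
  obtain ⟨h1, h2, h3⟩ := hu
  obtain ⟨h4, h5, h6⟩ := ho
  have hcs := Real.sin_sq_add_cos_sq φ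
  have n1 : ⟪t, t⟫ = 1 := by rw [real_inner_self_eq_norm_sq, h1, one_pow]
  have n2 : ⟪n, n⟫ = 1 := by rw [real_inner_self_eq_norm_sq, h2, one_pow]
  have n3 : ⟪b, b⟫ = 1 := by rw [real_inner_self_eq_norm_sq, h3, one_pow]
  have h4' : ⟪n, t⟫ = 0 := by rw [real_inner_comm]; exact h4
  have h5' : ⟪b, t⟫ = 0 := by rw [real_inner_comm]; exact h5
  have h6' : ⟪b, n⟫ = 0 := by rw [real_inner_comm]; exact h6
  subst hw hN
  simp only [inner_add_left, inner_add_right, inner_sub_left, inner_sub_right,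
    real_inner_smul_left, real_inner_smul_right, n1, n2, n3, h4, h5, h6,
    h4', h5', h6']
  refine ⟨?_, ?_, ?_⟩
  · linear_combination q ^ 2 * hcs
  · linear_combination q * r * hcs
  · linear_combination (1 + r ^ 2) * hcs

/-- The scalar core: `m, q, r` are the frame components of `α_s = m t + q N` and `α_v = w + r N`
as functions of `v`, `dm, dq, dr` their derivatives, `e` is `det[α_s, α_v, α_ss]`, and `κ`, `d`
and `a` stand for `k sin θ`, `A'` and `A` at the given point of the curve. -/
lemma principal_quotient (m q r dm dq dr e : ℝ → ℝ) (a κ d : ℝ)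
    (hm : HasDerivAt m (dm 0) 0) (hq : HasDerivAt q (dq 0) 0) (hr : HasDerivAt r (dr 0) 0)
    (hdm : DifferentiableAt ℝ dm 0) (hdq : HasDerivAt dq d 0) (hdr : DifferentiableAt ℝ dr 0)
    (he : DifferentiableAt ℝ e 0)
    (m0 : m 0 = 1) (q0 : q 0 = 0) (r0 : r 0 = 0) (dq0 : dq 0 = 0) (dr0 : dr 0 = a)
    (e0 : e 0 = -κ) (hne : a + κ ≠ 0) (E F G S : ℝ → ℝ)
    (hE : ∀ v, E v = m v ^ 2 + q v ^ 2) (hF : ∀ v, F v = q v * r v)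
    (hG : ∀ v, G v = 1 + r v ^ 2) (hS : ∀ v, S v = Real.sqrt (E v * G v - F v ^ 2)) :
    (∀ᶠ v in nhds (0 : ℝ), E v * ((m v * dr v) / S v) - G v * (e v / S v) ≠ 0) ∧
    (-(E 0 * ((m 0 * dq 0 - q 0 * dm 0) / S 0) - F 0 * (e 0 / S 0)) /
      (E 0 * ((m 0 * dr 0) / S 0) - G 0 * (e 0 / S 0)) = 0) ∧
    deriv (fun v => -(E v * ((m v * dq v - q v * dm v) / S v) - F v * (e v / S v)) /
      (E v * ((m v * dr v) / S v) - G v * (e v / S v))) 0 = -d / (a + κ) := by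
  have hEf : E = fun v => m v ^ 2 + q v ^ 2 := funext hE
  have hFf : F = fun v => q v * r v := funext hF
  have hGf : G = fun v => 1 + r v ^ 2 := funext hG
  have hSf : S = fun v => Real.sqrt (E v * G v - F v ^ 2) := funext hS
  have dE : HasDerivAt E (2 * dm 0) 0 := by
    rw [hEf]
    refine HasDerivAt.congr_deriv ((hm.pow 2).add (hq.pow 2)) ?_
    simp [m0, q0]
  have dF : HasDerivAt F 0 0 := by
    rw [hFf]
    refine HasDerivAt.congr_deriv (hq.mul hr) ?_
    simp [q0, r0]
  have dG : DifferentiableAt ℝ G 0 := by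
    rw [hGf]
    exact (hr.differentiableAt.pow 2).const_add 1
  have E0 : E 0 = 1 := by simp [hE, m0, q0]
  have F0 : F 0 = 0 := by simp [hF, q0]
  have G0 : G 0 = 1 := by simp [hG, r0]
  have S0 : S 0 = 1 := by simp [hS, E0, F0, G0]
  have hSc : ContinuousAt S 0 := by
    rw [hSf]
    exact Real.continuous_sqrt.continuousAt.comp
      ((dE.continuousAt.mul dG.continuousAt).sub (dF.continuousAt.pow 2))
  have hSne : ∀ᶠ v in nhds (0 : ℝ), S v ≠ 0 :=
    hSc.eventually_ne (by rw [S0]; norm_num)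
  -- The quotient with the common factor `1 / S` removed.
  have dNum : HasDerivAt (fun v => E v * (m v * dq v - q v * dm v) - F v * e v) d 0 := by
    refine HasDerivAt.congr_deriv ((dE.mul ((hm.mul hdq).sub (hq.mul hdm.hasDerivAt))).sub
      (dF.mul he.hasDerivAt)) ?_
    simp [m0, q0, dq0, E0, F0]
  have dDen : DifferentiableAt ℝ (fun v => E v * (m v * dr v) - G v * e v) 0 :=
    (dE.differentiableAt.mul (hm.differentiableAt.mul hdr)).sub (dG.mul he)
  have Den0 : E 0 * (m 0 * dr 0) - G 0 * e 0 = a + κ := by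
    rw [E0, m0, dr0, G0, e0]; ring
  have hDne : ∀ᶠ v in nhds (0 : ℝ), E v * (m v * dr v) - G v * e v ≠ 0 :=
    dDen.continuousAt.eventually_ne (by simpa only [Den0] using hne)
  refine ⟨?_, ?_, ?_⟩
  · filter_upwards [hSne, hDne] with v h1 h2 h3
    apply h2
    field_simp at h3
    linear_combination h3
  · simp [dq0, q0, F0]
  · have hev : (fun v => -(E v * ((m v * dq v - q v * dm v) / S v) - F v * (e v / S v)) /
        (E v * ((m v * dr v) / S v) - G v * (e v / S v))) =ᶠ[nhds 0]
        fun v => -(E v * (m v * dq v - q v * dm v) - F v * e v) /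
          (E v * (m v * dr v) - G v * e v) := by
      filter_upwards [hSne] with v h1
      rw [← mul_div_assoc, ← mul_div_assoc, ← mul_div_assoc, ← mul_div_assoc, ← sub_div,
        ← sub_div, ← neg_div, div_div_div_cancel_right₀ h1]
    rw [hev.deriv_eq]
    have := dNum.neg.div dDen.hasDerivAt (by simpa only [Den0] using hne)
    refine this.deriv.trans ?_
    simp only [Pi.neg_apply, Den0]
    have hn0 : E 0 * (m 0 * dq 0 - q 0 * dm 0) - F 0 * e 0 = 0 := by
      simp [dq0, q0, F0]
    rw [hn0]
    field_simp
    ring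

theorem statement10
    (L : ℝ) (hL : 0 < L)
    (c t n b : ℝ → EuclideanSpace ℝ (Fin 3)) (k τ : ℝ → ℝ)
    (hct : ContDiff ℝ (⊤ : ℕ∞) c) (htt : ContDiff ℝ (⊤ : ℕ∞) t) (hnt : ContDiff ℝ (⊤ : ℕ∞) n)
    (hbt : ContDiff ℝ (⊤ : ℕ∞) b) (hkt : ContDiff ℝ (⊤ : ℕ∞) k) (hτt : ContDiff ℝ (⊤ : ℕ∞) τ)
    (hcL : Function.Periodic c L) (htL : Function.Periodic t L)
    (hnL : Function.Periodic n L) (hbL : Function.Periodic b L)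
    (hkL : Function.Periodic k L) (hτL : Function.Periodic τ L)
    (hkpos : ∀ s, 0 < k s)
    (htc : ∀ s, t s = deriv c s)
    (hunit : ∀ s, ‖t s‖ = 1 ∧ ‖n s‖ = 1 ∧ ‖b s‖ = 1)
    (horth : ∀ s, ⟪t s, n s⟫ = 0 ∧ ⟪t s, b s⟫ = 0 ∧ ⟪n s, b s⟫ = 0)
    (hcross : ∀ s, b s 0 = t s 1 * n s 2 - t s 2 * n s 1 ∧
      b s 1 = t s 2 * n s 0 - t s 0 * n s 2 ∧
      b s 2 = t s 0 * n s 1 - t s 1 * n s 0)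
    (hfr1 : ∀ s, deriv t s = k s • n s)
    (hfr2 : ∀ s, deriv n s = (-(k s)) • t s + τ s • b s)
    (hfr3 : ∀ s, deriv b s = (-(τ s)) • n s)
    (θ : ℝ → ℝ) (hθt : ContDiff ℝ (⊤ : ℕ∞) θ)
    (w N : ℝ → EuclideanSpace ℝ (Fin 3))
    (hw : ∀ s, w s = Real.cos (θ s) • n s + Real.sin (θ s) • b s)
    (hN : ∀ s, N s = Real.cos (θ s) • b s - Real.sin (θ s) • n s)
    (A B : ℝ → ℝ) (C : ℝ → ℝ → ℝ)
    (hAt : ContDiff ℝ (⊤ : ℕ∞) A) (hBt : ContDiff ℝ (⊤ : ℕ∞) B)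
    (hCt : ContDiff ℝ (⊤ : ℕ∞) (Function.uncurry C))
    (hAL : Function.Periodic A L) (hBL : Function.Periodic B L)
    (hCL : ∀ v, Function.Periodic (fun s => C s v) L)
    (hC0 : ∀ s, C s 0 = 0)
    (α : ℝ → ℝ → EuclideanSpace ℝ (Fin 3))
    (hα : ∀ s v, α s v = c s + v • w s +
      (A s * v ^ 2 / 2 + B s * v ^ 3 / 6 + v ^ 4 * C s v) • N s)
    (hθ' : ∀ s, deriv θ s = -τ s)
    (αs αv αss αsv αvv : ℝ → ℝ → EuclideanSpace ℝ (Fin 3))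
    (hαs : ∀ s v, αs s v = deriv (fun u => α u v) s)
    (hαv : ∀ s v, αv s v = deriv (fun u => α s u) v)
    (hαss : ∀ s v, αss s v = deriv (fun u => αs u v) s)
    (hαsv : ∀ s v, αsv s v = deriv (fun u => αs s u) v)
    (hαvv : ∀ s v, αvv s v = deriv (fun u => αv s u) v)
    (Ef Ff Gf : ℝ → ℝ → ℝ)
    (hE : ∀ s v, Ef s v = ⟪αs s v, αs s v⟫)
    (hF : ∀ s v, Ff s v = ⟪αs s v, αv s v⟫)
    (hG : ∀ s v, Gf s v = ⟪αv s v, αv s v⟫)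
    (ef ff gf : ℝ → ℝ → ℝ)
    (he : ∀ s v, ef s v =
      det3 (αs s v) (αv s v) (αss s v) / Real.sqrt (Ef s v * Gf s v - Ff s v ^ 2))
    (hf : ∀ s v, ff s v =
      det3 (αs s v) (αv s v) (αsv s v) / Real.sqrt (Ef s v * Gf s v - Ff s v ^ 2))
    (hg : ∀ s v, gf s v =
      det3 (αs s v) (αv s v) (αvv s v) / Real.sqrt (Ef s v * Gf s v - Ff s v ^ 2))
    (humb : ∀ s, A s + k s * Real.sin (θ s) ≠ 0)
    (h : ℝ → ℝ → ℝ)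
    (hh : ∀ s v, h s v = -(Ef s v * ff s v - Ff s v * ef s v) /
      (Ef s v * gf s v - Gf s v * ef s v)) :
    ∀ s : ℝ,
      (∀ᶠ v in nhds (0:ℝ), Ef s v * gf s v - Gf s v * ef s v ≠ 0) ∧
      h s 0 = 0 ∧
      deriv (fun v => h s v) 0 = -deriv A s / (A s + k s * Real.sin (θ s)) := by
  intro s
  have dθ : ∀ u, HasDerivAt θ (-τ u) u := fun u => hθ' u ▸ hasDerivAt_of_contDiff hθt u
  have dc : ∀ u, HasDerivAt c (t u) u := fun u => htc u ▸ hasDerivAt_of_contDiff hct u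
  have dt : ∀ u, HasDerivAt t (k u • n u) u := fun u => hfr1 u ▸ hasDerivAt_of_contDiff htt u
  have dn : ∀ u, HasDerivAt n ((-(k u)) • t u + τ u • b u) u :=
    fun u => hfr2 u ▸ hasDerivAt_of_contDiff hnt u
  have db : ∀ u, HasDerivAt b ((-(τ u)) • n u) u :=
    fun u => hfr3 u ▸ hasDerivAt_of_contDiff hbt u
  have dw : ∀ u, HasDerivAt w ((-(k u * Real.cos (θ u))) • t u) u := by
    intro u
    rw [show w = fun s => Real.cos (θ s) • n s + Real.sin (θ s) • b s from funext hw]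
    refine HasDerivAt.congr_deriv (((dθ u).cos.smul (dn u)).add ((dθ u).sin.smul (db u))) ?_
    module
  have dN : ∀ u, HasDerivAt N ((k u * Real.sin (θ u)) • t u) u := by
    intro u
    rw [show N = fun s => Real.cos (θ s) • b s - Real.sin (θ s) • n s from funext hN]
    refine HasDerivAt.congr_deriv (((dθ u).cos.smul (db u)).sub ((dθ u).sin.smul (dn u))) ?_
    module
  set C1 : ℝ → ℝ → ℝ := fun s v => deriv (fun u => C u v) s with hC1
  set C2 : ℝ → ℝ → ℝ := fun s v => deriv (fun u => C1 u v) s with hC2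
  have sC1 : ContDiff ℝ ∞ (Function.uncurry C1) := contDiff_partial_left hCt
  have sC2 : ContDiff ℝ ∞ (Function.uncurry C2) := contDiff_partial_left sC1
  have dA : ∀ u, HasDerivAt A (deriv A u) u := hasDerivAt_of_contDiff hAt
  have dB : ∀ u, HasDerivAt B (deriv B u) u := hasDerivAt_of_contDiff hBt
  have dA' : ∀ u, HasDerivAt (deriv A) (deriv (deriv A) u) u :=
    hasDerivAt_of_contDiff (contDiff_deriv hAt)
  have dB' : ∀ u, HasDerivAt (deriv B) (deriv (deriv B) u) u :=
    hasDerivAt_of_contDiff (contDiff_deriv hBt)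
  -- `P a b d v` is the shape shared by the coefficient of `N` in `α` and by its `s`-derivatives.
  let P : ℝ → ℝ → ℝ → ℝ → ℝ := fun a b d v => a * v ^ 2 / 2 + b * v ^ 3 / 6 + v ^ 4 * d
  have dPs : ∀ {a b d : ℝ → ℝ} {a' b' d' u : ℝ} (v : ℝ), HasDerivAt a a' u →
      HasDerivAt b b' u → HasDerivAt d d' u →
      HasDerivAt (fun u => P (a u) (b u) (d u) v) (P a' b' d' v) u := by
    intro a b d a' b' d' u v ha hb hd
    exact (((ha.mul_const _).div_const _).add ((hb.mul_const _).div_const _)).add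
      (hd.const_mul _)
  let P' : ℝ → ℝ → (ℝ → ℝ) → ℝ → ℝ := fun a b d v =>
    a * v + b * v ^ 2 / 2 + (4 * v ^ 3 * d v + v ^ 4 * deriv d v)
  have dPv : ∀ (a b : ℝ) {d : ℝ → ℝ} (_ : ContDiff ℝ ∞ d) (v : ℝ),
      HasDerivAt (fun v => P a b (d v) v) (P' a b d v) v := by
    intro a b d hd v
    refine HasDerivAt.congr_deriv (((((hasDerivAt_id v).pow 2).const_mul a).div_const 2).add
      ((((hasDerivAt_id v).pow 3).const_mul b).div_const 6) |>.add
      (((hasDerivAt_id v).pow 4).mul (hasDerivAt_of_contDiff hd v))) ?_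
    simp [P']
    ring
  have sP' : ∀ (a b : ℝ) {d : ℝ → ℝ} (_ : ContDiff ℝ ∞ d), ContDiff ℝ ∞ (P' a b d) := by
    intro a b d hd
    have := contDiff_deriv hd
    show ContDiff ℝ ∞ fun v => a * v + b * v ^ 2 / 2 + (4 * v ^ 3 * d v + v ^ 4 * deriv d v)
    fun_prop
  have dP'0 : ∀ (a b : ℝ) {d : ℝ → ℝ} (_ : ContDiff ℝ ∞ d), HasDerivAt (P' a b d) a 0 := by
    intro a b d hd
    have h1 := hasDerivAt_of_contDiff hd 0
    have h2 := hasDerivAt_of_contDiff (contDiff_deriv hd) 0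
    refine HasDerivAt.congr_deriv ((((hasDerivAt_id (0 : ℝ)).const_mul a).add
      ((((hasDerivAt_id (0 : ℝ)).pow 2).const_mul b).div_const 2)).add
      (((((hasDerivAt_id (0 : ℝ)).pow 3).const_mul 4).mul h1).add
        (((hasDerivAt_id (0 : ℝ)).pow 4).mul h2))) ?_
    simp
  let p : ℝ → ℝ → ℝ := fun u v => P (A u) (B u) (C u v) v
  let q : ℝ → ℝ → ℝ := fun u v => P (deriv A u) (deriv B u) (C1 u v) v
  let qs : ℝ → ℝ → ℝ := fun u v => P (deriv (deriv A) u) (deriv (deriv B) u) (C2 u v) v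
  let r : ℝ → ℝ → ℝ := fun u => P' (A u) (B u) (C u)
  let qv : ℝ → ℝ → ℝ := fun u => P' (deriv A u) (deriv B u) (C1 u)
  have dps : ∀ u v, HasDerivAt (fun u => p u v) (q u v) u := fun u v =>
    dPs v (dA u) (dB u) (hasDerivAt_partial_left hCt u v)
  have dqs : ∀ u v, HasDerivAt (fun u => q u v) (qs u v) u := fun u v =>
    dPs v (dA' u) (dB' u) (hasDerivAt_partial_left sC1 u v)
  have dpv : ∀ u v, HasDerivAt (p u) (r u v) v := fun u v =>
    dPv _ _ (contDiff_slice_right hCt u) v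
  have dqv : ∀ u v, HasDerivAt (q u) (qv u v) v := fun u v =>
    dPv _ _ (contDiff_slice_right sC1 u) v
  have sr : ∀ u, ContDiff ℝ ∞ (r u) := fun u => sP' _ _ (contDiff_slice_right hCt u)
  let κc : ℝ → ℝ := fun u => k u * Real.cos (θ u)
  let κs : ℝ → ℝ := fun u => k u * Real.sin (θ u)
  have dκc : ∀ u, HasDerivAt κc (deriv κc u) u :=
    hasDerivAt_of_contDiff (hkt.mul (Real.contDiff_cos.comp hθt))
  have dκs : ∀ u, HasDerivAt κs (deriv κs u) u :=
    hasDerivAt_of_contDiff (hkt.mul (Real.contDiff_sin.comp hθt))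
  let m : ℝ → ℝ → ℝ := fun u v => 1 - v * κc u + p u v * κs u
  let ms : ℝ → ℝ → ℝ := fun u v => -(v * deriv κc u) + (q u v * κs u + p u v * deriv κs u)
  let mv : ℝ → ℝ → ℝ := fun u v => -κc u + r u v * κs u
  have dms : ∀ u v, HasDerivAt (fun u => m u v) (ms u v) u := fun u v =>
    (((dκc u).const_mul v).const_sub 1).add ((dps u v).mul (dκs u))
  have dmv : ∀ u v, HasDerivAt (m u) (mv u v) v := by
    intro u v
    refine HasDerivAt.congr_deriv ((((hasDerivAt_id v).mul_const (κc u)).const_sub 1).add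
      ((dpv u v).mul_const (κs u))) ?_
    simp [mv]
  have eαs : ∀ u v, αs u v = m u v • t u + q u v • N u := by
    intro u v
    rw [hαs, show (fun u => α u v) = fun u => c u + v • w u + p u v • N u from
      funext fun u => hα u v]
    refine (((dc u).add ((dw u).const_smul v)).add ((dps u v).smul (dN u))).deriv.trans ?_
    simp only [m, κc, κs]
    module
  have eαv : ∀ u v, αv u v = w u + r u v • N u := by
    intro u v
    rw [hαv, show (fun v => α u v) = fun v => c u + v • w u + p u v • N u from
      funext fun v => hα u v]
    refine ((((hasDerivAt_id v).smul_const (w u)).const_add (c u)).add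
      ((dpv u v).smul_const (N u))).deriv.trans ?_
    simp
  have en : ∀ u, n u = Real.cos (θ u) • w u - Real.sin (θ u) • N u := by
    intro u
    rw [hw, hN]
    have h1 : n u = (Real.sin (θ u) ^ 2 + Real.cos (θ u) ^ 2) • n u := by
      rw [Real.sin_sq_add_cos_sq, one_smul]
    conv_lhs => rw [h1]
    module
  have eαss : ∀ u v, αss u v = (ms u v + q u v * κs u) • t u + (m u v * κc u) • w u +
      (qs u v - m u v * κs u) • N u := by
    intro u v
    rw [hαss, show (fun u => αs u v) = fun u => m u v • t u + q u v • N u from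
      funext fun u => eαs u v]
    refine (((dms u v).smul (dt u)).add ((dqs u v).smul (dN u))).deriv.trans ?_
    rw [en u]
    simp only [κc, κs]
    module
  have eαsv : ∀ u v, αsv u v = mv u v • t u + (0 : ℝ) • w u + qv u v • N u := by
    intro u v
    rw [hαsv, show (fun v => αs u v) = fun v => m u v • t u + q u v • N u from
      funext fun v => eαs u v]
    refine (((dmv u v).smul_const (t u)).add ((dqv u v).smul_const (N u))).deriv.trans ?_
    module
  have eαvv : ∀ u v, αvv u v = (0 : ℝ) • t u + (0 : ℝ) • w u + deriv (r u) v • N u := by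
    intro u v
    rw [hαvv, show (fun v => αv u v) = fun v => w u + r u v • N u from
      funext fun v => eαv u v]
    refine (((hasDerivAt_of_contDiff (sr u) v).smul_const (N u)).const_add (w u)).deriv.trans ?_
    module
  have hdet := fun v x y z => det3_frame_s10 (t s) (n s) (b s) (w s) (N s) (θ s) (hunit s).2.2
    (hcross s) (hw s) (hN s) (m s v) (q s v) (r s v) x y z
  have hin := fun v => inner_frame (t s) (n s) (b s) (w s) (N s) (θ s) (hunit s) (horth s)
    (hw s) (hN s) (m s v) (q s v) (r s v)
  let e : ℝ → ℝ := fun v => m s v * (qs s v - m s v * κs s - r s v * (m s v * κc s)) -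
    q s v * (ms s v + q s v * κs s)
  have he' : ∀ v, ef s v = e v / Real.sqrt (Ef s v * Gf s v - Ff s v ^ 2) := by
    intro v
    rw [he, eαs, eαv, eαss, hdet]
  have hf' : ∀ v, ff s v = (m s v * qv s v - q s v * mv s v) /
      Real.sqrt (Ef s v * Gf s v - Ff s v ^ 2) := by
    intro v
    rw [hf, eαs, eαv, eαsv, hdet, mul_zero, sub_zero]
  have hg' : ∀ v, gf s v = (m s v * deriv (r s) v) /
      Real.sqrt (Ef s v * Gf s v - Ff s v ^ 2) := by
    intro v
    rw [hg, eαs, eαv, eαvv, hdet, mul_zero, sub_zero, mul_zero, sub_zero]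
  have r1 : HasDerivAt (r s) (A s) 0 := dP'0 _ _ (contDiff_slice_right hCt s)
  have ddr : DifferentiableAt ℝ (deriv (r s)) 0 :=
    (contDiff_deriv (sr s)).differentiable (by simp) 0
  have dmv0 : DifferentiableAt ℝ (mv s) 0 :=
    (r1.differentiableAt.mul_const (κs s)).const_add (-κc s)
  have p0 : p s 0 = 0 := by simp [p, P]
  have q0 : q s 0 = 0 := by simp [q, P]
  have r0 : r s 0 = 0 := by simp [r, P']
  have m0 : m s 0 = 1 := by simp [m, p0]
  have dqs0 : DifferentiableAt ℝ (qs s) 0 :=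
    (dPv _ _ (contDiff_slice_right sC2 s) 0).differentiableAt
  have dms0 : DifferentiableAt ℝ (ms s) 0 :=
    ((differentiableAt_id.mul_const _).neg).add
      (((dqv s 0).differentiableAt.mul_const _).add ((dpv s 0).differentiableAt.mul_const _))
  have de : DifferentiableAt ℝ e 0 := by
    have h1 := (dmv s 0).differentiableAt
    have h2 := (dqv s 0).differentiableAt
    have h3 := r1.differentiableAt
    exact (h1.mul ((dqs0.sub (h1.mul_const _)).sub (h3.mul (h1.mul_const _)))).sub
      (h2.mul (dms0.add (h2.mul_const _)))
  have key := principal_quotient (m s) (q s) (r s) (mv s) (qv s) (deriv (r s)) e (A s) (κs s)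
    (deriv A s) (dmv s 0) (dqv s 0) (hasDerivAt_of_contDiff (sr s) 0) dmv0
    (dP'0 _ _ (contDiff_slice_right sC1 s)) ddr de m0 q0 r0 (by simp [qv, P']) r1.deriv
    (by simp [e, m0, q0, r0, qs, P]) (humb s) (Ef s) (Ff s) (Gf s)
    (fun v => Real.sqrt (Ef s v * Gf s v - Ff s v ^ 2))
    (fun v => by rw [hE, eαs]; exact (hin v).1)
    (fun v => by rw [hF, eαs, eαv]; exact (hin v).2.1)
    (fun v => by rw [hG, eαv]; exact (hin v).2.2) (fun v => rfl)
  simp only [hh, he', hf', hg']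
  exact key
end

section
/- Let a, k : ℝ → ℝ be continuous, L > 0, k(s) > 0 for all s ∈ [0, L]. Then the function Λ(ε) = ∫₀^L a(s)/(k(s) + ε·a(s)) ds, defined for ε in a neighborhood of 0, is differentiable at ε = 0 with Λ'(0) = −∫₀^L (a(s)/k(s))² ds. Consequently, if a is not identically zero on [0, L] and ∫₀^L a(s)/k(s) ds = 0, then there exists ε ≠ 0, arbitrarily small, with k(s) + ε·a(s) > 0 for all s ∈ [0, L] and ∫₀^L a(s)/(k(s) + ε·a(s)) ds ≠ 0. -/
/-!
By compactness of `[0, L]`, `k ≥ m > 0` and `|a| ≤ M` there, so `k + ε a ≥ m / 2` for all small `ε`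
(`exists_uniform_bounds`). On this range the `ε`-derivative `-(a / (k + ε a))²` of the integrand is
bounded by `(M / (m / 2))²`, and dominated convergence allows differentiation under the integral
sign. If `a` does not vanish identically on `[0, L]`, continuity makes `∫ (a / k)²` positive, so
`Λ'(0) ≠ 0` and `Λ(ε) ≠ 0` for all small `ε ≠ 0`.
-/

open Real intervalIntegral
open scoped RealInnerProductSpace

/-- Bounds on the integrand and its denominator that are uniform in `s ∈ [0, L]` and `|ε| < r`. -/
lemma exists_uniform_bounds (L : ℝ) (hL : 0 < L) (a k : ℝ → ℝ)
    (ha : Continuous a) (hk : Continuous k)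
    (hkpos : ∀ s ∈ Set.Icc (0:ℝ) L, 0 < k s) :
    ∃ r > 0, ∃ c > 0, ∃ M : ℝ, ∀ s ∈ Set.Icc (0:ℝ) L, |a s| ≤ M ∧
      ∀ ε : ℝ, |ε| < r → c ≤ k s + ε * a s := by
  have hne : (Set.Icc (0:ℝ) L).Nonempty := Set.nonempty_Icc.2 hL.le
  obtain ⟨s₀, hs₀, hmin⟩ := isCompact_Icc.exists_isMinOn hne hk.continuousOn
  obtain ⟨M, hM⟩ := isCompact_Icc.exists_bound_of_continuousOn (s := Set.Icc (0:ℝ) L)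
    ha.continuousOn
  have hm := hkpos s₀ hs₀
  have hM0 : 0 ≤ M := (norm_nonneg _).trans (hM s₀ hs₀)
  -- `M + 1` rather than `M` keeps the denominator of `r` nonzero when `a` vanishes.
  refine ⟨k s₀ / (2 * (M + 1)), by positivity, k s₀ / 2, by positivity, M, fun s hs => ?_⟩
  have haM : |a s| ≤ M := hM s hs
  refine ⟨haM, fun ε hε => ?_⟩
  have h1 : k s₀ ≤ k s := hmin hs
  rw [lt_div_iff₀ (by positivity)] at hε
  have h2 : |ε * a s| ≤ |ε| * (M + 1) := by
    rw [abs_mul]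
    gcongr
    linarith
  linarith [neg_abs_le (ε * a s)]

theorem statement16 (L : ℝ) (hL : 0 < L) (a k : ℝ → ℝ)
    (ha : Continuous a) (hk : Continuous k)
    (hkpos : ∀ s ∈ Set.Icc (0:ℝ) L, 0 < k s) :
    HasDerivAt (fun ε => ∫ s in (0:ℝ)..L, a s / (k s + ε * a s))
      (-∫ s in (0:ℝ)..L, (a s / k s) ^ 2) 0 ∧
    ((∃ s ∈ Set.Icc (0:ℝ) L, a s ≠ 0) →
      (∫ s in (0:ℝ)..L, a s / k s) = 0 →
      ∀ δ > (0:ℝ), ∃ ε : ℝ, ε ≠ 0 ∧ |ε| < δ ∧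
        (∀ s ∈ Set.Icc (0:ℝ) L, 0 < k s + ε * a s) ∧
        (∫ s in (0:ℝ)..L, a s / (k s + ε * a s)) ≠ 0) := by
  obtain ⟨r, hr, c, hc, M, hB⟩ := exists_uniform_bounds L hL a k ha hk hkpos
  have hcont : ContinuousOn (fun s => a s / k s) (Set.Icc 0 L) :=
    ha.continuousOn.div hk.continuousOn fun s hs => (hkpos s hs).ne'
  have hIoc : ∀ s ∈ Set.uIoc 0 L, s ∈ Set.Icc 0 L := fun s hs => by
    rw [Set.uIoc_of_le hL.le] at hs
    exact Set.Ioc_subset_Icc_self hs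
  have hball : ∀ ε ∈ Metric.ball (0:ℝ) r, |ε| < r := fun ε hε => by simpa using hε
  have hderiv : HasDerivAt (fun ε => ∫ s in (0:ℝ)..L, a s / (k s + ε * a s))
      (-∫ s in (0:ℝ)..L, (a s / k s) ^ 2) 0 := by
    have key := (hasDerivAt_integral_of_dominated_loc_of_deriv_le
      (μ := MeasureTheory.volume) (a := 0) (b := L) (x₀ := (0:ℝ))
      (F := fun ε s => a s / (k s + ε * a s))
      (F' := fun ε s => -(a s / (k s + ε * a s)) ^ 2) (bound := fun _ => (M / c) ^ 2)
      (Metric.ball_mem_nhds 0 hr) (Filter.Eventually.of_forall fun ε => ?_) ?_ ?_ ?_ ?_ ?_).2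
    · simpa using key
    · exact (ha.measurable.div
        (hk.measurable.add (ha.measurable.const_mul ε))).aestronglyMeasurable
    · refine ContinuousOn.intervalIntegrable ?_
      simpa [Set.uIcc_of_le hL.le] using hcont
    · exact ((ha.measurable.div
        (hk.measurable.add (ha.measurable.const_mul 0))).pow_const 2).neg.aestronglyMeasurable
    · refine Filter.Eventually.of_forall fun s hs ε hε => ?_
      obtain ⟨hM, hlow⟩ := hB s (hIoc s hs)
      have h1 := hlow ε (hball ε hε)
      have hM0 : 0 ≤ M := (abs_nonneg _).trans hM
      rw [norm_neg, norm_pow, Real.norm_eq_abs, abs_div, abs_of_pos (hc.trans_le h1)]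
      have h0 : 0 ≤ |a s| / (k s + ε * a s) := div_nonneg (abs_nonneg _) (hc.le.trans h1)
      gcongr
    · exact intervalIntegrable_const
    · refine Filter.Eventually.of_forall fun s hs ε hε => ?_
      have h1 := hc.trans_le ((hB s (hIoc s hs)).2 ε (hball ε hε))
      have h2 : HasDerivAt (fun x : ℝ => k s + x * a s) (a s) ε := by
        simpa using ((hasDerivAt_id ε).mul_const (a s)).const_add (k s)
      refine ((hasDerivAt_const ε (a s)).div h2 h1.ne').congr_deriv ?_
      rw [div_pow]
      ring
  refine ⟨hderiv, fun ⟨s₁, hs₁, hne⟩ _ δ hδ => ?_⟩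
  have hpos : 0 < ∫ s in (0:ℝ)..L, (a s / k s) ^ 2 :=
    intervalIntegral.integral_pos hL (hcont.pow 2) (fun s _ => sq_nonneg _)
      ⟨s₁, hs₁, sq_pos_of_ne_zero (div_ne_zero hne (hkpos s₁ hs₁).ne')⟩
  have hev := hderiv.eventually_ne (c := 0) (neg_ne_zero.2 hpos.ne')
  have hsmall : ∀ᶠ ε in nhdsWithin (0:ℝ) {0}ᶜ, ε ∈ Metric.ball (0:ℝ) (min δ r) :=
    nhdsWithin_le_nhds (Metric.ball_mem_nhds 0 (lt_min hδ hr))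
  obtain ⟨ε, ⟨h1, h2⟩, h3⟩ := ((hev.and hsmall).and self_mem_nhdsWithin).exists
  have h4 : |ε| < min δ r := by simpa using h2
  exact ⟨ε, h3, h4.trans_le (min_le_left _ _),
    fun s hs => hc.trans_le ((hB s hs).2 ε (h4.trans_le (min_le_right _ _))), h1⟩
end

section
/- Let L > 0, let k, τ : ℝ → ℝ be smooth and L-periodic with k(s) > 0 for all s, τ not identically zero, and ∫₀^L τ(u) du = 2πm for some integer m. Then there exist θ₀ ∈ ℝ and a smooth L-periodic function A : ℝ → ℝ such that, with θ(s) = θ₀ − ∫₀^s τ(u) du: (i) A(s) + k(s)·sin θ(s) > 0 for all s (the principal cycle carries no umbilic points), and (ii) ∫₀^L A'(s)/(A(s) + k(s)·sin θ(s)) ds ≠ 0 (the characteristic exponent is nonzero, so the cycle is hyperbolic). -/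
/-!
Write `g = k sin θ` and look for `A = B - g` with `B > 0` periodic, so that `A + g = B`. Since
`B'/B = (log B)'` integrates to zero over a period, the characteristic exponent equals
`-∫ g'/B`. Choosing `1/B = C + g'` with a constant `C` large enough for positivity turns it into
`-C ∫ g' - ∫ g'² = -∫ g'²`, which is negative as soon as `g'` is not identically zero
(`exists_periodic_of_deriv_ne_zero`).

For the latter, pick `s₀` with `τ s₀ ≠ 0` and `θ₀ = ∫₀^{s₀} τ`; then `θ s₀ = 0` and
`g' s₀ = -k s₀ τ s₀ ≠ 0`. The hypothesis on the total torsion makes `g` periodic.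
-/

open scoped ContDiff in
/-- For any nonconstant smooth periodic `g`, the function `A = 1 / (C + g') - g` with `C` large
makes `A + g` positive and `∫ A' / (A + g) = -∫ g'²` nonzero. -/
lemma exists_periodic_of_deriv_ne_zero (L : ℝ) (hL : 0 < L) (g : ℝ → ℝ)
    (hg : ContDiff ℝ ∞ g) (hgL : Function.Periodic g L) (s₀ : ℝ) (hs₀ : deriv g s₀ ≠ 0) :
    ∃ A : ℝ → ℝ, ContDiff ℝ ∞ A ∧ Function.Periodic A L ∧ (∀ s, 0 < A s + g s) ∧
      (∫ s in (0:ℝ)..L, deriv A s / (A s + g s)) ≠ 0 := by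
  have hg' : ContDiff ℝ ∞ (deriv g) := (contDiff_infty_iff_deriv.1 hg).2
  have hg'c : Continuous (deriv g) := hg'.continuous
  have hgd : Differentiable ℝ g := (contDiff_infty_iff_deriv.1 hg).1
  have hg'L : Function.Periodic (deriv g) L := by
    intro s
    rw [← deriv_comp_add_const]
    exact congrArg (fun f => deriv f s) (funext hgL)
  obtain ⟨C, hC⟩ : ∃ C, ∀ s, 0 < C + deriv g s := by
    obtain ⟨M, hM⟩ := (isCompact_Icc (a := (0:ℝ)) (b := L)).exists_bound_of_continuousOn
      hg'c.continuousOn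
    refine ⟨M + 1, fun s => ?_⟩
    obtain ⟨y, hy, hsy⟩ := hg'L.exists_mem_Ico₀ hL s
    have := hM y ⟨hy.1, hy.2.le⟩
    rw [Real.norm_eq_abs] at this
    rw [hsy]
    linarith [neg_abs_le (deriv g y)]
  set w : ℝ → ℝ := fun s => C + deriv g s with hw
  have hwS : ContDiff ℝ ∞ w := contDiff_const.add hg'
  have hwL : Function.Periodic w L := fun s => by simp only [hw, hg'L s]
  have hB : ContDiff ℝ ∞ (fun s => (w s)⁻¹) := hwS.inv fun s => (hC s).ne'
  have hBd : Differentiable ℝ (fun s => (w s)⁻¹) := (contDiff_infty_iff_deriv.1 hB).1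
  have hBc : Continuous (deriv (fun s => (w s)⁻¹)) := (contDiff_infty_iff_deriv.1 hB).2.continuous
  refine ⟨fun s => (w s)⁻¹ - g s, hB.sub hg, fun s => by simp only [hwL s, hgL s],
    fun s => by simpa using hC s, ?_⟩
  have hlog : (∫ s in (0:ℝ)..L, deriv (fun s => (w s)⁻¹) s / (w s)⁻¹) = 0 := by
    rw [intervalIntegral.integral_eq_sub_of_hasDerivAt
      (f := fun s => Real.log ((w s)⁻¹))
      (fun s _ => (hBd s).hasDerivAt.log (inv_ne_zero (hC s).ne'))
      ((hBc.div hB.continuous fun s => inv_ne_zero (hC s).ne').intervalIntegrable _ _)]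
    have := hwL 0
    rw [zero_add] at this
    rw [this, sub_self]
  have hzero : (∫ s in (0:ℝ)..L, deriv g s) = 0 := by
    rw [intervalIntegral.integral_deriv_eq_sub (fun s _ => hgd s)
      (hg'c.intervalIntegrable _ _)]
    have := hgL 0
    rw [zero_add] at this
    rw [this, sub_self]
  have hpos : 0 < ∫ s in (0:ℝ)..L, deriv g s ^ 2 := by
    obtain ⟨y, hy, hsy⟩ := hg'L.exists_mem_Ico₀ hL s₀
    refine intervalIntegral.integral_pos hL (hg'c.pow 2).continuousOn
      (fun s _ => sq_nonneg _) ⟨y, ⟨hy.1, hy.2.le⟩, ?_⟩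
    rw [← hsy]
    positivity
  have hsplit : (∫ s in (0:ℝ)..L, deriv (fun s => (w s)⁻¹ - g s) s / ((w s)⁻¹ - g s + g s))
      = (∫ s in (0:ℝ)..L, deriv (fun s => (w s)⁻¹) s / (w s)⁻¹)
        - (C * (∫ s in (0:ℝ)..L, deriv g s) + ∫ s in (0:ℝ)..L, deriv g s ^ 2) := by
    rw [← intervalIntegral.integral_const_mul, ← intervalIntegral.integral_add,
      ← intervalIntegral.integral_sub]
    · refine intervalIntegral.integral_congr fun s _ => ?_
      have hd : deriv (fun s => (w s)⁻¹ - g s) s = deriv (fun s => (w s)⁻¹) s - deriv g s :=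
        deriv_fun_sub (hBd s) (hgd s)
      simp only [hd, sub_add_cancel, div_inv_eq_mul]
      simp only [hw]
      ring
    · exact (hBc.div hB.continuous fun s => inv_ne_zero (hC s).ne').intervalIntegrable _ _
    · exact ((continuous_const.mul hg'c).add (hg'c.pow 2)).intervalIntegrable _ _
    · exact (continuous_const.mul hg'c).intervalIntegrable _ _
    · exact (hg'c.pow 2).intervalIntegrable _ _
  rw [hsplit, hlog, hzero]
  linarith

open Real intervalIntegral
open scoped RealInnerProductSpace

theorem statement17 (L : ℝ) (hL : 0 < L) (k τ : ℝ → ℝ) (m : ℤ)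
    (hk : ContDiff ℝ (⊤ : ℕ∞) k) (hτ : ContDiff ℝ (⊤ : ℕ∞) τ)
    (hkL : Function.Periodic k L) (hτL : Function.Periodic τ L)
    (hkpos : ∀ s, 0 < k s) (hτne : ∃ s, τ s ≠ 0)
    (htot : (∫ u in (0:ℝ)..L, τ u) = 2 * Real.pi * m) :
    ∃ (θ₀ : ℝ) (A : ℝ → ℝ), ContDiff ℝ (⊤ : ℕ∞) A ∧ Function.Periodic A L ∧
      (∀ s, 0 < A s + k s * Real.sin (θ₀ - ∫ u in (0:ℝ)..s, τ u)) ∧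
      (∫ s in (0:ℝ)..L,
        deriv A s / (A s + k s * Real.sin (θ₀ - ∫ u in (0:ℝ)..s, τ u))) ≠ 0 := by
  obtain ⟨s₀, hs₀⟩ := hτne
  have hτc : Continuous τ := hτ.continuous
  set T : ℝ → ℝ := fun s => ∫ u in (0:ℝ)..s, τ u with hT
  have hTd : ∀ s, HasDerivAt T (τ s) s := fun s => hτc.integral_hasStrictDerivAt 0 s |>.hasDerivAt
  have hTS : ContDiff ℝ (⊤ : ℕ∞) T := by
    refine contDiff_infty_iff_deriv.2 ⟨fun s => (hTd s).differentiableAt, ?_⟩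
    rwa [show deriv T = τ from funext fun s => (hTd s).deriv]
  have hTL : ∀ s, T (s + L) = T s + m * (2 * Real.pi) := by
    intro s
    have h1 : (∫ u in s..(s + L), τ u) = ∫ u in (0:ℝ)..(0 + L), τ u :=
      hτL.intervalIntegral_add_eq s 0
    have h2 := intervalIntegral.integral_add_adjacent_intervals
      (hτc.intervalIntegrable (μ := MeasureTheory.volume) 0 s) (hτc.intervalIntegrable s (s + L))
    rw [zero_add, htot] at h1
    simp only [hT]
    rw [← h2, h1]
    ring
  refine ⟨T s₀, exists_periodic_of_deriv_ne_zero L hL (fun s => k s * Real.sin (T s₀ - T s))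
    (hk.mul (Real.contDiff_sin.comp (contDiff_const.sub hTS))) (fun s => ?_) s₀ ?_⟩
  · simp only [hkL s, hTL s, ← sub_sub, Real.sin_sub_int_mul_two_pi]
  · have hkd : HasDerivAt k (deriv k s₀) s₀ :=
      ((contDiff_infty_iff_deriv.1 hk).1 s₀).hasDerivAt
    have h := (hkd.fun_mul ((hTd s₀).const_sub (T s₀)).sin).deriv
    rw [h]
    simp [hs₀, (hkpos s₀).ne']
end

section
/- Let L > 0, let θ : ℝ → ℝ be continuous with θ(L) = θ(0) − 2πm for some nonzero integer m. Then there exists s ∈ [0, L] with sin θ(s) = 0. Consequently, for a ruled surface of the form α (i.e. A ≡ 0, B ≡ 0, C ≡ 0) over a closed Frenet curve with total torsion 2πm, m ≠ 0, and θ' = −τ, the umbilic equation A(s) + k(s) sin θ(s) = 0 has a solution on [0, L]; that is, there are always umbilic points along the curve. -/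
/-! Since `|θ L - θ 0| = 2π|m| ≥ 2π`, the interval between `θ 0` and `θ L` contains an integer
multiple of `π`. The intermediate value theorem gives `s ∈ [0, L]` at which `θ` attains it, so
`sin (θ s) = 0`, and the same `s` solves the umbilic equation with `A ≡ 0`. -/

open Real intervalIntegral
open scoped RealInnerProductSpace

/-- An interval of length at least `π` contains an integer multiple of `π`. -/
lemma exists_int_mul_pi_mem_Icc {a b : ℝ} (h : a + π ≤ b) :
    ∃ n : ℤ, (n : ℝ) * π ∈ Set.Icc a b := by
  refine ⟨⌈a / π⌉, ?_, ?_⟩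
  · exact (div_le_iff₀ pi_pos).1 (Int.le_ceil _)
  · have h1 := mul_lt_mul_of_pos_right (Int.ceil_lt_add_one (a / π)) pi_pos
    rw [add_mul, div_mul_cancel₀ _ pi_ne_zero] at h1
    linarith

theorem statement19 (L : ℝ) (hL : 0 < L) (θ : ℝ → ℝ) (m : ℤ) (hm : m ≠ 0)
    (hθ : Continuous θ) (hθL : θ L = θ 0 - 2 * Real.pi * m) (k : ℝ → ℝ) :
    (∃ s ∈ Set.Icc (0:ℝ) L, Real.sin (θ s) = 0) ∧
    (∃ s ∈ Set.Icc (0:ℝ) L, (0:ℝ) + k s * Real.sin (θ s) = 0) := by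
  have hn : ∃ n : ℤ, (n : ℝ) * π ∈ Set.uIcc (θ 0) (θ L) := by
    rcases lt_or_gt_of_ne hm with h | h
    · have hm' : (m : ℝ) ≤ -1 := by exact_mod_cast Int.le_sub_one_of_lt h
      obtain ⟨n, hn⟩ := exists_int_mul_pi_mem_Icc (a := θ 0) (b := θ L)
        (by nlinarith [pi_pos])
      exact ⟨n, Set.Icc_subset_uIcc hn⟩
    · have hm' : (1 : ℝ) ≤ m := by exact_mod_cast h
      obtain ⟨n, hn⟩ := exists_int_mul_pi_mem_Icc (a := θ L) (b := θ 0)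
        (by nlinarith [pi_pos])
      exact ⟨n, Set.Icc_subset_uIcc' hn⟩
  obtain ⟨n, hn⟩ := hn
  obtain ⟨s, hs, hsn⟩ := intermediate_value_uIcc hθ.continuousOn hn
  rw [Set.uIcc_of_le hL.le] at hs
  have hsin : Real.sin (θ s) = 0 := by rw [hsn, sin_int_mul_pi]
  exact ⟨⟨s, hs, hsin⟩, s, hs, by rw [hsin, mul_zero, add_zero]⟩
end
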